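/- arXiv:2110.15908 — 2 statements merged into one kernel-verified Lean document; each statement's English description precedes it below -/
import Mathlib

section
/- Let X be a smooth extremal surface of degree q+1 in ℙ³(k). Then the set of all stars on X has cardinality exactly (q³+1)(q²+1) = q⁵+q³+q²+1; equivalently, since each star point is the center of exactly one star, X has exactly (q³+1)(q²+1) star points. -/
open Module

/-! Basic setup: `k` is an algebraically closed field of characteristic `p > 0`,
`q = p^e`.  We model ℙ³(k) via linear subspaces of `k⁴ = Fin 4 → k`:
points, lines and planes of ℙ³(k) are subspaces of dimension 1, 2 and 3
respectively.  A hypersurface cut out by a homogeneous form is recorded by its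
affine cone in `k⁴`. -/

/-- The Frobenius form in 4 variables determined by a 4×4 matrix `A`:
`∑ i j, A i j * x i ^ q * x j`, a homogeneous form of degree `q+1`. -/
def frobForm {k : Type*} [Field k] (q : ℕ) (A : Matrix (Fin 4) (Fin 4) k)
    (x : Fin 4 → k) : k :=
  ∑ i, ∑ j, A i j * x i ^ q * x j

/-- The affine cone in `k⁴` of the extremal surface in ℙ³(k) cut out by the
Frobenius form with matrix `A`; a point of ℙ³(k) lies on the surface iff its
homogeneous coordinate representatives lie in this set. -/
def extremalCone (k : Type*) [Field k] (q : ℕ) (A : Matrix (Fin 4) (Fin 4) k) :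
    Set (Fin 4 → k) :=
  {x | frobForm q A x = 0}

/-- A point of ℙ³(k): a 1-dimensional subspace of `k⁴`. -/
def IsPoint {k : Type*} [Field k] (c : Submodule k (Fin 4 → k)) : Prop :=
  finrank k c = 1

/-- A line of ℙ³(k): a 2-dimensional subspace of `k⁴`. -/
def IsLine {k : Type*} [Field k] (L : Submodule k (Fin 4 → k)) : Prop :=
  finrank k L = 2

/-- A plane of ℙ³(k): a 3-dimensional subspace of `k⁴`. -/
def IsPlane {k : Type*} [Field k] (H : Submodule k (Fin 4 → k)) : Prop :=
  finrank k H = 3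

/-- `L` is a line lying on the surface with affine cone `X`. -/
def IsLineOn {k : Type*} [Field k] (X : Set (Fin 4 → k))
    (L : Submodule k (Fin 4 → k)) : Prop :=
  IsLine L ∧ (L : Set (Fin 4 → k)) ⊆ X

/-- Two lines of ℙ³(k) meet iff the corresponding subspaces of `k⁴` intersect
nontrivially. -/
def MeetsLine {k : Type*} [Field k] (L M : Submodule k (Fin 4 → k)) : Prop :=
  L ⊓ M ≠ ⊥

/-- Two lines of ℙ³(k) are skew iff the corresponding subspaces of `k⁴`
intersect trivially. -/
def SkewLine {k : Type*} [Field k] (L M : Submodule k (Fin 4 → k)) : Prop :=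
  L ⊓ M = ⊥

/-- `IsStarAt q X S c`: `S` is a star on the surface with affine cone `X`,
centered at the point `c`, i.e. a set of `q+1` distinct lines on the surface
all passing through `c`. -/
def IsStarAt {k : Type*} [Field k] (q : ℕ) (X : Set (Fin 4 → k))
    (S : Set (Submodule k (Fin 4 → k))) (c : Submodule k (Fin 4 → k)) : Prop :=
  IsPoint c ∧ S.ncard = q + 1 ∧ ∀ L ∈ S, IsLineOn X L ∧ c ≤ L

/-- `S` is a star on the surface with affine cone `X`. -/
def IsStar {k : Type*} [Field k] (q : ℕ) (X : Set (Fin 4 → k))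
    (S : Set (Submodule k (Fin 4 → k))) : Prop :=
  ∃ c, IsStarAt q X S c

/-- `c` is a star point of the surface with affine cone `X`. -/
def IsStarPoint {k : Type*} [Field k] (q : ℕ) (X : Set (Fin 4 → k))
    (c : Submodule k (Fin 4 → k)) : Prop :=
  ∃ S, IsStarAt q X S c

/-- `H` is a star plane of the surface with affine cone `X`, centered at `c`:
the plane section `X ∩ H` is the union of a star centered at `c`. -/
def IsStarPlaneAt {k : Type*} [Field k] (q : ℕ) (X : Set (Fin 4 → k))
    (H c : Submodule k (Fin 4 → k)) : Prop :=
  IsPlane H ∧ ∃ S, IsStarAt q X S c ∧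
    X ∩ (H : Set (Fin 4 → k)) = ⋃ L ∈ S, (L : Set (Fin 4 → k))

/-- An element of `Aut(X)`: since every projective linear automorphism of
ℙ³(k) is represented by an invertible linear map of `k⁴` (uniquely up to
scalars, which act trivially on subspaces and preserve every cone), `g ∈
PGL(4,k)` with `g(X) = X` corresponds to a linear automorphism of `k⁴`
mapping the affine cone `X` onto itself. -/
def PreservesCone {k : Type*} [Field k] (X : Set (Fin 4 → k))
    (g : (Fin 4 → k) ≃ₗ[k] (Fin 4 → k)) : Prop :=
  (⇑g) '' X = X

/-- Polynomials used to solve the fixed point equation. -/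
noncomputable def langPoly {k : Type*} [Field k] (Q : ℕ) (a : ℕ → k) : ℕ → Polynomial k
  | 0 => Polynomial.C (a 0) * Polynomial.X ^ Q
  | (i+1) => (langPoly Q a i) ^ Q + Polynomial.C (a (i+1)) * Polynomial.X ^ Q

lemma langPoly_natDegree {k : Type*} [Field k] (Q : ℕ) (hQ : 1 < Q) (a : ℕ → k) (h0 : a 0 ≠ 0) (i : ℕ) :
    (langPoly Q a i).natDegree = Q ^ (i+1) := by
  induction i with
  | zero => simp only [langPoly]; rw [Polynomial.natDegree_C_mul_X_pow _ _ h0]; simp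
  | succ i ih =>
    simp only [langPoly]
    have h1 : ((langPoly Q a i) ^ Q).natDegree = Q ^ (i+1+1) := by
      rw [Polynomial.natDegree_pow, ih]; ring
    rw [Polynomial.natDegree_add_eq_left_of_natDegree_lt, h1]
    rw [h1]
    refine lt_of_le_of_lt (Polynomial.natDegree_C_mul_X_pow_le _ _) ?_
    calc Q = Q ^ 1 := by simp
      _ < Q ^ (i+1+1) := Nat.pow_lt_pow_right hQ (by omega)

lemma langPoly_derivative {k : Type*} [Field k] (Q : ℕ) (hQ : (Q : k) = 0) (a : ℕ → k) (i : ℕ) :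
    (langPoly Q a i).derivative = 0 := by
  cases i <;> simp [langPoly, Polynomial.derivative_pow, hQ]

lemma langPoly_eval_zero {k : Type*} [Field k] (Q : ℕ) (hQ : 1 < Q) (a : ℕ → k) (i : ℕ) :
    (langPoly Q a i).eval 0 = 0 := by
  have : Q ≠ 0 := by omega
  induction i with
  | zero => simp [langPoly, this]
  | succ i ih => simp [langPoly, this, ih]

/-- a separable polynomial over an algebraically closed field has degree-many roots. -/
lemma card_roots_sep {k : Type*} [Field k] [IsAlgClosed k] [DecidableEq k] (f : Polynomial k) (h : f.Separable) :
    f.roots.toFinset.card = f.natDegree := by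
  rw [Multiset.toFinset_card_of_nodup (Polynomial.nodup_roots h)]
  exact (IsAlgClosed.splits f).natDegree_eq_card_roots.symm

lemma exists_nonzero_root {k : Type*} [Field k] [IsAlgClosed k] (Q : ℕ) (hQ1 : 1 < Q) (hQ : (Q : k) = 0)
    (a : ℕ → k) (h0 : a 0 ≠ 0) (i : ℕ) : ∃ t : k, t ≠ 0 ∧ (langPoly Q a i).eval t = t := by
  classical
  set f := langPoly Q a i - Polynomial.X with hf
  have hd : f.natDegree = Q ^ (i+1) := by
    rw [hf, Polynomial.natDegree_sub_eq_left_of_natDegree_lt, langPoly_natDegree Q hQ1 a h0]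
    rw [langPoly_natDegree Q hQ1 a h0, Polynomial.natDegree_X]
    exact Nat.one_lt_pow (by omega) hQ1
  have hs : f.Separable := by
    rw [Polynomial.separable_def, hf, Polynomial.derivative_sub, langPoly_derivative Q hQ]
    refine ⟨0, -1, ?_⟩
    simp
  have hc := card_roots_sep f hs
  have : 1 < f.roots.toFinset.card := by
    rw [hc, hd]; exact Nat.one_lt_pow (by omega) hQ1
  obtain ⟨t, ht, ht0⟩ := Finset.exists_mem_ne this 0
  refine ⟨t, ht0, ?_⟩
  simp only [Multiset.mem_toFinset, Polynomial.mem_roots', hf, Polynomial.IsRoot.def] at ht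
  have := ht.2
  simp at this
  linear_combination this

lemma exists_fixed {k : Type*} [Field k] [IsAlgClosed k] (Q : ℕ) (hQ1 : 1 < Q) (hQ : (Q : k) = 0)
    (σ : k →+* k) (hσ : ∀ x, σ x = x ^ Q) {V : Type*} [AddCommGroup V] [Module k V]
    [FiniteDimensional k V] (φ : V →ₛₗ[σ] V) (hφ : Function.Injective φ) (v : V) (hv : v ≠ 0) :
    ∃ w : V, w ≠ 0 ∧ φ w = w := by
  classical
  set u : ℕ → V := fun i => φ^[i] v with hu
  have hus : ∀ i, u (i+1) = φ (u i) := fun i => by simp [hu, Function.iterate_succ_apply']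
  have hli : ∀ r, (∀ r' < r, u r' ∉ Submodule.span k (Set.range fun i : Fin r' => u i)) →
      LinearIndependent k (fun i : Fin r => u i) := by
    intro r
    induction r with
    | zero => intro _; exact linearIndependent_empty_type
    | succ r ih =>
      intro h
      rw [linearIndependent_finSucc']
      exact ⟨ih fun r' hr' => h r' (by omega), by simpa [Fin.init_def] using h r (by omega)⟩
  have hex : ∃ r, u r ∈ Submodule.span k (Set.range fun i : Fin r => u i) := by
    by_contra! hcon
    have := (hli (finrank k V + 1) fun r' _ => hcon r').fintype_card_le_finrank
    simp at this
  set r := Nat.find hex with hr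
  have hmem := Nat.find_spec hex
  have hmin := fun r' (h : r' < r) => Nat.find_min hex h
  rw [← hr] at hmem
  have hind := hli r hmin
  have hr0 : r ≠ 0 := by
    intro h0
    rw [h0] at hmem
    simp [hu] at hmem
    exact hv hmem
  obtain ⟨s, hs⟩ := Nat.exists_eq_succ_of_ne_zero hr0
  clear_value r
  subst hs
  rw [Submodule.mem_span_range_iff_exists_fun] at hmem
  obtain ⟨a', ha'⟩ := hmem
  set a : ℕ → k := fun i => if h : i < s+1 then a' ⟨i, h⟩ else 0 with ha
  have hsum : ∑ i ∈ Finset.range (s+1), a i • u i = u (s+1) := by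
    rw [Finset.sum_range]
    rw [← ha']
    apply Finset.sum_congr rfl
    intro i _
    simp [ha]
    intro h; exact absurd i.is_lt (by omega)
  have hroot : ∀ x : k, ∃ y, σ y = x := fun x => by
    obtain ⟨y, hy⟩ := IsAlgClosed.exists_pow_nat_eq x (n := Q) (by omega)
    exact ⟨y, by rw [hσ, hy]⟩
  have ha0 : a 0 ≠ 0 := by
    intro h0
    rw [Finset.sum_range_succ', h0, zero_smul, add_zero] at hsum
    choose b hb using fun i => hroot (a (i+1))
    have : φ (∑ i ∈ Finset.range s, b i • u i) = φ (u s) := by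
      rw [← hus, ← hsum, map_sum]
      apply Finset.sum_congr rfl
      intro i _
      rw [φ.map_smulₛₗ, hb, hus]
    have := hφ this
    refine hmin s (by omega) ?_
    rw [← this]
    refine Submodule.sum_mem _ fun i hi => Submodule.smul_mem _ _ (Submodule.subset_span ⟨⟨i, by simpa using hi⟩, rfl⟩)
  obtain ⟨t, ht0, ht⟩ := exists_nonzero_root Q hQ1 hQ a ha0 s
  set x : ℕ → k := fun i => (langPoly Q a i).eval t with hx
  have hx0 : x 0 = a 0 * t ^ Q := by simp [hx, langPoly]
  have hxs : ∀ i, x (i+1) = x i ^ Q + a (i+1) * t ^ Q := fun i => by simp [hx, langPoly]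
  refine ⟨∑ i ∈ Finset.range (s+1), x i • u i, ?_, ?_⟩
  · intro h0
    rw [Finset.sum_range] at h0
    have := Fintype.linearIndependent_iff.1 hind (fun i => x i) h0 (Fin.last s)
    apply ht0
    rw [← ht]; simpa using this
  · rw [map_sum, Finset.sum_range_succ]
    simp only [φ.map_smulₛₗ, ← hus]
    have hxt : x s = t := ht
    rw [hxt, ← hsum, hσ t, Finset.smul_sum, Finset.sum_range_succ', Finset.sum_range_succ' (fun i => x i • u i),
      ← add_assoc, ← Finset.sum_add_distrib]
    congr 1
    · apply Finset.sum_congr rfl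
      intro i _
      rw [hxs, hσ, smul_smul, add_smul, mul_comm (t^Q)]
    · rw [hx0, smul_smul, mul_comm]

lemma lang_span {k : Type*} [Field k] [IsAlgClosed k] (Q : ℕ) (hQ1 : 1 < Q) (hQ : (Q : k) = 0)
    (σ : k →+* k) (hσ : ∀ x, σ x = x ^ Q) (n : ℕ) : ∀ {V : Type*} [AddCommGroup V] [Module k V]
    [FiniteDimensional k V] (_ : finrank k V = n) (φ : V →ₛₗ[σ] V) (_ : Function.Injective φ),
    Submodule.span k {v | φ v = v} = ⊤ := by
  have hroot : ∀ x : k, ∃ y, σ y = x := fun x => by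
    obtain ⟨y, hy⟩ := IsAlgClosed.exists_pow_nat_eq x (n := Q) (by omega)
    exact ⟨y, by rw [hσ, hy]⟩
  induction n with
  | zero =>
    intro V _ _ _ hn φ hφ
    have := finrank_zero_iff.1 hn
    exact Subsingleton.elim _ _
  | succ n ih =>
    intro V _ _ _ hn φ hφ
    have : Nontrivial V := nontrivial_of_finrank_pos (R := k) (by omega)
    obtain ⟨v, hv⟩ := exists_ne (0 : V)
    obtain ⟨w, hw0, hw⟩ := exists_fixed Q hQ1 hQ σ hσ φ hφ v hv
    set W := Submodule.span k {w} with hW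
    have hle : W ≤ W.comap φ := by
      rw [hW, Submodule.span_le]
      intro x hx
      simp only [Set.mem_singleton_iff] at hx
      subst hx
      simp [hw, Submodule.mem_span_singleton_self]
    have hfin : finrank k (V ⧸ W) = n := by
      have := W.finrank_quotient_add_finrank
      rw [hW, finrank_span_singleton hw0] at this
      rw [hW]; omega
    have hinj : Function.Injective (W.mapQ W φ hle) := by
      rw [injective_iff_map_eq_zero]
      intro a
      obtain ⟨x, rfl⟩ := Submodule.Quotient.mk_surjective W a
      rw [Submodule.mapQ_apply, Submodule.Quotient.mk_eq_zero, Submodule.Quotient.mk_eq_zero, hW,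
        Submodule.mem_span_singleton, Submodule.mem_span_singleton]
      rintro ⟨c, hc⟩
      obtain ⟨d, hd⟩ := hroot c
      refine ⟨d, hφ ?_⟩
      rw [φ.map_smulₛₗ, hd, hw, hc]
    have key := ih hfin (W.mapQ W φ hle) hinj
    set F := Submodule.span k {v | φ v = v} with hF
    have hwF : W ≤ F := by
      rw [hW, Submodule.span_le]
      intro x hx
      simp only [Set.mem_singleton_iff] at hx
      subst hx
      exact Submodule.subset_span hw
    have h2 : F.map W.mkQ = ⊤ := by
      rw [eq_top_iff, ← key, Submodule.span_le]
      intro a ha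
      obtain ⟨x, rfl⟩ := Submodule.Quotient.mk_surjective W a
      simp only [Set.mem_ofPred_eq, Submodule.mapQ_apply] at ha
      rw [Submodule.Quotient.eq, hW, Submodule.mem_span_singleton] at ha
      obtain ⟨b, hb⟩ := ha
      have : ∃ s : k, s ^ Q - s + b = 0 := by
        have hd : (Polynomial.X ^ Q - Polynomial.X + Polynomial.C b : Polynomial k).natDegree = Q := by
          rw [Polynomial.natDegree_add_C, Polynomial.natDegree_sub_eq_left_of_natDegree_lt] <;>
            simp [hQ1]
        obtain ⟨s, hs⟩ := IsAlgClosed.exists_root (Polynomial.X ^ Q - Polynomial.X + Polynomial.C b : Polynomial k) (by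
          intro h
          rw [Polynomial.natDegree_eq_zero_iff_degree_le_zero.2 h.le] at hd
          omega)
        exact ⟨s, by simpa using hs⟩
      obtain ⟨s, hs⟩ := this
      refine ⟨x + s • w, Submodule.subset_span ?_, ?_⟩
      · simp only [Set.mem_ofPred_eq, map_add, φ.map_smulₛₗ, hσ, hw]
        have : φ x = x + b • w := by rw [hb]; abel
        rw [this, add_assoc, ← add_smul]
        congr 2
        linear_combination hs
      · simp only [map_add, map_smul, Submodule.mkQ_apply]
        have : (Submodule.Quotient.mk w : V ⧸ W) = 0 := by
          rw [Submodule.Quotient.mk_eq_zero]; exact Submodule.mem_span_singleton_self w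
        rw [this]; simp
    rw [eq_top_iff]
    intro x _
    have : W.mkQ x ∈ F.map W.mkQ := by rw [h2]; trivial
    obtain ⟨y, hy, hyx⟩ := this
    have : x - y ∈ W := by
      rw [← Submodule.Quotient.eq]; exact hyx.symm
    have := F.add_mem (hwF this) hy
    simpa using this

/-- The field with `q^2` elements, as a finset. -/
noncomputable def KF (k : Type*) [Field k] (q : ℕ) : Finset k := by
  classical
  exact (Polynomial.X ^ (q ^ 2) - Polynomial.X : Polynomial k).roots.toFinset

lemma KF_aux {k : Type*} [Field k] (q : ℕ) (hq1 : 1 < q) :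
    (Polynomial.X ^ (q ^ 2) - Polynomial.X : Polynomial k).natDegree = q ^ 2 := by
  have : 1 < q ^ 2 := Nat.one_lt_pow (by omega) hq1
  rw [Polynomial.natDegree_sub_eq_left_of_natDegree_lt] <;> simp [this]

lemma mem_KF {k : Type*} [Field k] (q : ℕ) (hq1 : 1 < q) (σ : k →+* k) (hσ : ∀ x, σ x = x ^ q) (x : k) :
    x ∈ KF k q ↔ σ (σ x) = x := by
  have h0 : (Polynomial.X ^ (q ^ 2) - Polynomial.X : Polynomial k) ≠ 0 := by
    intro h
    have := KF_aux (k := k) q hq1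
    rw [h] at this
    rw [Polynomial.natDegree_zero] at this
    have h2 : 0 < q ^ 2 := by positivity
    omega
  simp only [KF, Multiset.mem_toFinset, Polynomial.mem_roots', Polynomial.IsRoot.def, hσ, ← pow_mul, ← sq]
  simp [h0, sub_eq_zero]

lemma card_KF {k : Type*} [Field k] [IsAlgClosed k] (q : ℕ) (hq1 : 1 < q) (hq : (q : k) = 0) :
    (KF k q).card = q ^ 2 := by
  classical
  have := card_roots_sep (Polynomial.X ^ (q ^ 2) - Polynomial.X : Polynomial k) (by
    rw [Polynomial.separable_def]
    refine ⟨0, -1, ?_⟩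
    simp [Polynomial.derivative_pow, hq])
  rw [KF_aux q hq1] at this
  rw [← this, KF]

lemma exists_trace_ne {k : Type*} [Field k] [IsAlgClosed k] (q : ℕ) (hq1 : 1 < q) (hq : (q : k) = 0)
    (σ : k →+* k) (hσ : ∀ x, σ x = x ^ q) : ∃ z : k, σ (σ z) = z ∧ z + σ z ≠ 0 := by
  classical
  by_contra! hcon
  have hd : (Polynomial.X ^ q + Polynomial.X : Polynomial k).natDegree = q := by
    rw [Polynomial.natDegree_add_eq_left_of_natDegree_lt] <;> simp [hq1]
  have h0 : (Polynomial.X ^ q + Polynomial.X : Polynomial k) ≠ 0 := by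
    intro h
    rw [h] at hd
    simp at hd
    omega
  have hsub : KF k q ⊆ (Polynomial.X ^ q + Polynomial.X : Polynomial k).roots.toFinset := by
    intro z hz
    rw [mem_KF q hq1 σ hσ] at hz
    have := hcon z hz
    rw [hσ] at this
    simp only [Multiset.mem_toFinset, Polynomial.mem_roots', Polynomial.IsRoot.def]
    refine ⟨h0, ?_⟩
    simp
    linear_combination this
  have h1 := Finset.card_le_card hsub
  have h2 := Multiset.toFinset_card_le (Polynomial.X ^ q + Polynomial.X : Polynomial k).roots
  have h3 := Polynomial.card_roots' (Polynomial.X ^ q + Polynomial.X : Polynomial k)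
  rw [card_KF q hq1 hq] at h1
  nlinarith

/-- Gram–Schmidt step for vectors that are Hermitian. -/
lemma gs_step {k : Type*} [Field k] [IsAlgClosed k] (q : ℕ) (hq1 : 1 < q) (hq : (q : k) = 0)
    (σ : k →+* k) (hσ : ∀ x, σ x = x ^ q) {V : Type*} [AddCommGroup V] [Module k V]
    [FiniteDimensional k V] (B : V →ₛₗ[σ] V →ₗ[k] k)
    (hnd : ∀ w, (∀ v, B v w = 0) → w = 0)
    (hspan : Submodule.span k {y | ∀ x, B x y = σ (B y x)} = ⊤)
    (m : ℕ) (hm : m < finrank k V) (e : Fin m → V) (he : ∀ i x, B x (e i) = σ (B (e i) x))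
    (heo : ∀ i j, B (e i) (e j) = if i = j then 1 else 0) :
    ∃ x, (∀ y, B y x = σ (B x y)) ∧ (∀ i, B (e i) x = 0) ∧ B x x = 1 := by
  classical
  have hK : ∀ x y, (∀ z, B z x = σ (B x z)) → (∀ z, B z y = σ (B y z)) → σ (σ (B x y)) = B x y := by
    intro x y hx hy
    rw [← hx y, hy x]
  have hadd : ∀ x y, (∀ z, B z x = σ (B x z)) → (∀ z, B z y = σ (B y z)) → (∀ z, B z (x+y) = σ (B (x+y) z)) := by
    intro x y hx hy z
    simp [hx z, hy z]
  have hsmul : ∀ (c : k) x, σ (σ c) = c → (∀ z, B z x = σ (B x z)) → (∀ z, B z (c • x) = σ (B (c • x) z)) := by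
    intro c x hc hx z
    simp [hx z, hc]
  -- projection
  set P : V → V := fun v => v - ∑ i, B (e i) v • e i with hP
  have hPV : ∀ v, (∀ z, B z v = σ (B v z)) → (∀ z, B z (P v) = σ (B (P v) z)) := by
    intro v hv z
    simp only [hP, map_sub, map_sum, LinearMap.sub_apply, LinearMap.sum_apply, map_smul, LinearMap.map_smulₛₗ,
      LinearMap.smul_apply, smul_eq_mul, map_mul]
    rw [hv z]
    congr 1
    apply Finset.sum_congr rfl
    intro i _
    rw [hK (e i) v (he i) hv, he i z]
  have hPo : ∀ v i, B (e i) (P v) = 0 := by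
    intro v i
    simp [hP, heo]
  -- there are v w with B (P v) (P w) ≠ 0
  have hex : ∃ v w, (∀ z, B z v = σ (B v z)) ∧ (∀ z, B z w = σ (B w z)) ∧ B v w ≠ 0 ∧
      (∀ i, B (e i) v = 0) ∧ (∀ i, B (e i) w = 0) := by
    by_contra! hcon
    have h1 : ∀ w, (∀ z, B z w = σ (B w z)) → P w = 0 := by
      intro w hw
      apply hnd
      intro v
      have : v ∈ Submodule.span k {y | ∀ x, B x y = σ (B y x)} := by rw [hspan]; trivial
      induction this using Submodule.span_induction with
      | zero => simp
      | add x y _ _ hx hy => simp [hx, hy]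
      | smul a x _ hx => simp [hx]
      | mem v hv =>
        have hz : B (P v) (P w) = 0 := by
          by_contra hne
          obtain ⟨i, hi⟩ := hcon (P v) (P w) (hPV v hv) (hPV w hw) hne (hPo v)
          exact hi (hPo w i)
        have hv' : v = P v + ∑ i, B (e i) v • e i := by simp [hP]
        rw [hv']
        simp only [map_add, map_sum, LinearMap.add_apply, LinearMap.sum_apply, hz, LinearMap.map_smulₛₗ, LinearMap.smul_apply, hPo]
        simp
    have h2 : Submodule.span k (Set.range e) = ⊤ := by
      rw [eq_top_iff, ← hspan, Submodule.span_le]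
      intro w hw
      have := h1 w hw
      simp only [hP, sub_eq_zero] at this
      rw [this]
      exact Submodule.sum_mem _ fun i _ => Submodule.smul_mem _ _ (Submodule.subset_span ⟨i, rfl⟩)
    have h3 := finrank_range_le_card (R := k) e
    rw [Set.finrank, h2, finrank_top] at h3
    simp at h3
    omega
  have hex2 : ∃ x, (∀ z, B z x = σ (B x z)) ∧ (∀ i, B (e i) x = 0) ∧ B x x ≠ 0 := by
    obtain ⟨v, w, hv, hw, hvw, hev, hew⟩ := hex
    by_cases h1 : B v v = 0
    · by_cases h2 : B w w = 0
      · obtain ⟨z, hz, hz0⟩ := exists_trace_ne q hq1 hq σ hσ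
        have hc : σ (σ (z * (B v w)⁻¹)) = z * (B v w)⁻¹ := by
          simp [hz, hK v w hv hw]
        refine ⟨v + (z * (B v w)⁻¹) • w, hadd _ _ hv (hsmul _ _ hc hw), by simp [hev, hew], ?_⟩
        have : B (v + (z * (B v w)⁻¹) • w) (v + (z * (B v w)⁻¹) • w) = z + σ z := by
          have h3 : B w v = σ (B v w) := hv w
          have h4 : σ (B v w) ≠ 0 := by simpa using hvw
          simp [h1, h2, h3]
          field_simp
        rwa [this]
      · exact ⟨w, hw, hew, h2⟩
    · exact ⟨v, hv, hev, h1⟩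
  obtain ⟨x, hx, hex, hxx⟩ := hex2
  obtain ⟨l, hl⟩ := IsAlgClosed.exists_pow_nat_eq (B x x)⁻¹ (n := q + 1) (by omega)
  have hl1 : σ l * l = (B x x)⁻¹ := by rw [hσ, ← hl]; ring
  have hl0 : σ l ≠ 0 := by
    intro h; rw [h] at hl1; simp at hl1; exact hxx hl1.symm
  have hl2 : σ (σ l) = l := by
    have : σ (σ l * l) = σ l * l := by
      rw [hl1, map_inv₀, ← hx x]
    rw [map_mul, mul_comm] at this
    exact mul_left_cancel₀ hl0 this
  refine ⟨l • x, hsmul l x hl2 hx, by simp [hex], ?_⟩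
  simp
  rw [← mul_assoc, mul_comm l, hl1]
  field_simp

lemma gs {k : Type*} [Field k] [IsAlgClosed k] (q : ℕ) (hq1 : 1 < q) (hq : (q : k) = 0)
    (σ : k →+* k) (hσ : ∀ x, σ x = x ^ q) {V : Type*} [AddCommGroup V] [Module k V]
    [FiniteDimensional k V] (B : V →ₛₗ[σ] V →ₗ[k] k)
    (hnd : ∀ w, (∀ v, B v w = 0) → w = 0)
    (hspan : Submodule.span k {y | ∀ x, B x y = σ (B y x)} = ⊤)
    (m : ℕ) (hm : m ≤ finrank k V) : ∃ e : Fin m → V, (∀ i x, B x (e i) = σ (B (e i) x)) ∧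
    (∀ i j, B (e i) (e j) = if i = j then 1 else 0) := by
  induction m with
  | zero => exact ⟨fun i => i.elim0, fun i => i.elim0, fun i => i.elim0⟩
  | succ m ih =>
    obtain ⟨e, he, heo⟩ := ih (by omega)
    obtain ⟨x, hx, hex, hxx⟩ := gs_step q hq1 hq σ hσ B hnd hspan m (by omega) e he heo
    refine ⟨Fin.cons x e, ?_, ?_⟩
    · intro i
      refine Fin.cases ?_ ?_ i
      · simpa using hx
      · simpa using he
    · intro i j
      refine Fin.cases ?_ ?_ i
      · refine Fin.cases ?_ ?_ j
        · simpa using hxx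
        · intro j
          simp [he j x, hex, (Fin.succ_ne_zero _).symm]
      · intro i
        refine Fin.cases ?_ ?_ j
        · simp [hex, Fin.succ_ne_zero]
        · intro j
          simp [heo]

/-- The sesquilinear form of a matrix. -/
noncomputable def fB {k : Type*} [Field k] (σ : k →+* k) (A : Matrix (Fin 4) (Fin 4) k) :
    (Fin 4 → k) →ₛₗ[σ] (Fin 4 → k) →ₗ[k] k :=
  LinearMap.mk₂'ₛₗ σ (RingHom.id k) (fun x y => ∑ i, ∑ j, A i j * σ (x i) * y j)
    (by intro x y z; simp only [← Finset.sum_add_distrib]; simp; congr! 2; ring)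
    (by intro c x y; simp only [smul_eq_mul, Finset.mul_sum]; congr! 2; simp; ring)
    (by intro x y z; simp only [← Finset.sum_add_distrib]; simp; congr! 2; ring)
    (by intro c x y; simp only [smul_eq_mul, Finset.mul_sum]; congr! 2; simp; ring)

lemma fB_apply {k : Type*} [Field k] (σ : k →+* k) (A : Matrix (Fin 4) (Fin 4) k) (x y : Fin 4 → k) :
    fB σ A x y = ∑ i, ∑ j, A i j * σ (x i) * y j := rfl

lemma fB_dot {k : Type*} [Field k] (σ : k →+* k) (A : Matrix (Fin 4) (Fin 4) k) (x y : Fin 4 → k) :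
    fB σ A x y = (fun i => σ (x i)) ⬝ᵥ (A.mulVec y) := by
  rw [fB_apply]
  simp only [dotProduct, Matrix.mulVec, Finset.mul_sum]
  congr! 2; ring

/-- The twisted Frobenius. -/
noncomputable def twF {k : Type*} [Field k] (σ : k →+* k) (M : Matrix (Fin 4) (Fin 4) k) :
    (Fin 4 → k) →ₛₗ[σ.comp σ] (Fin 4 → k) where
  toFun y := M.mulVec (fun i => σ (σ (y i)))
  map_add' x y := by
    rw [← Matrix.mulVec_add]; congr 1; ext i; simp
  map_smul' c x := by
    rw [← Matrix.mulVec_smul]; congr 1; ext i; simp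

lemma twF_apply {k : Type*} [Field k] (σ : k →+* k) (M : Matrix (Fin 4) (Fin 4) k) (y : Fin 4 → k) :
    twF σ M y = M.mulVec (fun i => σ (σ (y i))) := rfl

lemma exists_fermat {k : Type*} [Field k] [IsAlgClosed k] (q : ℕ) (hq1 : 1 < q) (hq : (q : k) = 0)
    (σ : k →+* k) (hσ : ∀ x, σ x = x ^ q) (A : Matrix (Fin 4) (Fin 4) k) (hA : IsUnit A) :
    ∃ g : (Fin 4 → k) ≃ₗ[k] (Fin 4 → k), ∀ x, frobForm q A (g x) = frobForm q 1 x := by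
  have hfin : finrank k (Fin 4 → k) = 4 := by simp
  have hdet : IsUnit A.det := (Matrix.isUnit_iff_isUnit_det A).1 hA
  have hsurj : ∀ x : k, ∃ y, σ y = x := fun x => by
    obtain ⟨y, hy⟩ := IsAlgClosed.exists_pow_nat_eq x (n := q) (by omega)
    exact ⟨y, by rw [hσ, hy]⟩
  set M := A⁻¹ * (A.transpose.map σ) with hM
  have hMu : IsUnit M := by
    rw [Matrix.isUnit_iff_isUnit_det, hM, Matrix.det_mul]
    refine IsUnit.mul ?_ ?_
    · exact (Matrix.isUnit_nonsing_inv_det_iff).2 hdet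
    · have := σ.map_det A.transpose
      rw [RingHom.mapMatrix_apply] at this
      rw [← this, Matrix.det_transpose]
      exact hdet.map σ
  have hinj : Function.Injective (twF σ M) := by
    intro x y hxy
    have hxy' : M.mulVec (fun i => σ (σ (x i))) = M.mulVec (fun i => σ (σ (y i))) := hxy
    have := Matrix.mulVec_injective_of_isUnit hMu hxy'
    ext i
    exact σ.injective (σ.injective (congrFun this i))
  have hq2 : 1 < q ^ 2 := Nat.one_lt_pow (by omega) hq1
  have hL := lang_span (q ^ 2) hq2 (by simp [hq]) (σ.comp σ) (by intro x; simp [hσ]; ring) 4 hfin (twF σ M) hinj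
  have hnd : ∀ w, (∀ v, fB σ A v w = 0) → w = 0 := by
    intro w hw
    have : A.mulVec w = 0 := by
      apply dotProduct_eq_zero
      intro u
      choose v hv using fun i => hsurj (u i)
      have := hw v
      rw [fB_dot] at this
      rw [dotProduct_comm, ← this]
      congr 1
      ext i; rw [hv]
    exact Matrix.mulVec_injective_of_isUnit hA (by simpa using this)
  have hspan : Submodule.span k {y | ∀ x, fB σ A x y = σ (fB σ A y x)} = ⊤ := by
    rw [eq_top_iff, ← hL]
    apply Submodule.span_mono
    intro y hy x
    have hy' : A.mulVec y = (A.transpose.map σ).mulVec (fun i => σ (σ (y i))) := by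
      conv_lhs => rw [← (show twF σ M y = y from hy)]
      rw [twF_apply, hM, Matrix.mulVec_mulVec, ← mul_assoc, Matrix.mul_nonsing_inv _ hdet, one_mul]
    rw [fB_dot, hy', fB_apply]
    simp only [dotProduct, Matrix.mulVec, Matrix.map_apply, Matrix.transpose_apply, map_sum, map_mul, Finset.mul_sum]
    rw [Finset.sum_comm]
    congr! 2; ring
  obtain ⟨e, he, heo⟩ := gs q hq1 hq σ hσ (fB σ A) hnd hspan 4 (by simp)
  have hli : LinearIndependent k e := by
    rw [Fintype.linearIndependent_iff]
    intro c hc i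
    have : fB σ A (e i) (∑ j, c j • e j) = 0 := by rw [hc]; simp
    simpa [heo] using this
  let b := basisOfLinearIndependentOfCardEqFinrank hli (by simp)
  refine ⟨b.equivFun.symm, fun x => ?_⟩
  have h1 : ∀ A : Matrix (Fin 4) (Fin 4) k, ∀ y, frobForm q A y = fB σ A y y := by
    intro A y; simp [frobForm, fB_apply, hσ]
  rw [h1, h1, Basis.equivFun_symm_apply]
  have hb : ∀ i, b i = e i := fun i => by simp [b]
  simp only [hb, map_sum, LinearMap.sum_apply, LinearMap.map_smulₛₗ, LinearMap.smul_apply, heo, fB_apply]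
  simp [Matrix.one_apply, mul_comm]

lemma fB_one {k : Type*} [Field k] (σ : k →+* k) (x y : Fin 4 → k) :
    fB σ 1 x y = ∑ i, σ (x i) * y i := by
  simp [fB_apply, Matrix.one_apply]

lemma mem_fermat {k : Type*} [Field k] (q : ℕ) (σ : k →+* k) (hσ : ∀ x, σ x = x ^ q) (x : Fin 4 → k) :
    x ∈ extremalCone k q 1 ↔ fB σ 1 x x = 0 := by
  simp [extremalCone, frobForm, fB_apply, hσ]

lemma fB_herm {k : Type*} [Field k] (σ : k →+* k) (c : Fin 4 → k) (hc : ∀ i, σ (σ (c i)) = c i)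
    (v : Fin 4 → k) : fB σ 1 v c = σ (fB σ 1 c v) := by
  simp only [fB_one, map_sum, map_mul, hc]
  congr! 1; ring

lemma sum_two {k : Type*} [Field k] (f : Fin 4 → k) (a b : k) (i j : Fin 4) :
    ∑ l, f l * ((Pi.single i a - Pi.single j b : Fin 4 → k) l) = f i * a - f j * b := by
  simp [mul_sub, Finset.sum_sub_distrib, Pi.single_apply]

lemma key1 {k : Type*} [Field k] (σ : k →+* k) (c : Fin 4 → k) (hc : c ≠ 0) (y : Fin 4 → k)
    (h : ∀ v, fB σ 1 c v = 0 → fB σ 1 y v = 0) : ∃ μ : k, y = μ • c := by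
  obtain ⟨j, hj⟩ := Function.ne_iff.1 hc
  simp only [Pi.zero_apply] at hj
  refine ⟨y j / c j, ?_⟩
  ext i
  have h1 := h (Pi.single i (σ (c j)) - Pi.single j (σ (c i))) (by
    rw [fB_one, sum_two (fun l => σ (c l))]; ring)
  rw [fB_one, sum_two (fun l => σ (y l)), ← map_mul, ← map_mul, ← map_sub, map_eq_zero] at h1
  simp only [Pi.smul_apply, smul_eq_mul]
  field_simp
  linear_combination h1

lemma key2 {k : Type*} [Field k] (σ : k →+* k) (c : Fin 4 → k) (hc : c ≠ 0) (y : Fin 4 → k)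
    (h : ∀ v, fB σ 1 c v = 0 → fB σ 1 v y = 0) : ∃ μ : k, ∀ i, y i = μ * σ (σ (c i)) := by
  obtain ⟨j, hj⟩ := Function.ne_iff.1 hc
  simp only [Pi.zero_apply] at hj
  refine ⟨y j / σ (σ (c j)), ?_⟩
  intro i
  have h1 := h (Pi.single i (σ (c j)) - Pi.single j (σ (c i))) (by
    rw [fB_one, sum_two (fun l => σ (c l))]; ring)
  have h2 : fB σ 1 (Pi.single i (σ (c j)) - Pi.single j (σ (c i))) y =
      y i * σ (σ (c j)) - y j * σ (σ (c i)) := by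
    rw [fB_one, ← sum_two y (σ (σ (c j))) (σ (σ (c i)))]
    apply Finset.sum_congr rfl
    intro l _
    simp only [Pi.sub_apply, map_sub, Pi.single_apply]
    split_ifs <;> (try simp only [map_zero]) <;> ring
  rw [h2] at h1
  have hj' : σ (σ (c j)) ≠ 0 := by simpa using hj
  field_simp
  linear_combination h1

lemma finrank_ker_fB {k : Type*} [Field k] (σ : k →+* k) (c : Fin 4 → k) (hc : c ≠ 0) :
    finrank k (LinearMap.ker (fB σ 1 c)) = 3 := by
  have h0 : fB σ 1 c ≠ 0 := by
    intro h
    obtain ⟨j, hj⟩ := Function.ne_iff.1 hc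
    have := LinearMap.congr_fun h (Pi.single j 1)
    rw [fB_one] at this
    simp [Pi.single_apply] at this
    exact hj this
  have h1 := LinearMap.finrank_range_add_finrank_ker (fB σ 1 c)
  have h2 : finrank k (LinearMap.range (fB σ 1 c)) = 1 := by
    rw [LinearMap.range_eq_top.2 (LinearMap.surjective h0)]; simp
  simp at h1
  omega

lemma isotropic_polar {k : Type*} [Field k] [IsAlgClosed k] (q : ℕ) (hq1 : 1 < q)
    (σ : k →+* k) (hσ : ∀ x, σ x = x ^ q) (L : Submodule k (Fin 4 → k))
    (hL : ∀ x ∈ L, fB σ 1 x x = 0) : ∀ x ∈ L, ∀ y ∈ L, fB σ 1 x y = 0 := by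
  intro x hx y hy
  have h1 : ∀ t : k, t * fB σ 1 x y + σ t * fB σ 1 y x = 0 := by
    intro t
    have := hL (x + t • y) (L.add_mem hx (L.smul_mem t hy))
    simpa [hL x hx, hL y hy] using this
  have h2 := h1 1
  simp at h2
  obtain ⟨t, ht⟩ : ∃ t : k, σ t ≠ t := by
    by_contra! hcon
    have hd : (Polynomial.X ^ q - Polynomial.X : Polynomial k).natDegree = q := by
      rw [Polynomial.natDegree_sub_eq_left_of_natDegree_lt] <;> simp [hq1]
    have : (Polynomial.X ^ q - Polynomial.X : Polynomial k) = 0 := by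
      apply Polynomial.funext
      intro r
      have := hcon r
      rw [hσ] at this
      simp [this]
    rw [this] at hd
    simp at hd
    omega
  have h3 : (t - σ t) * fB σ 1 x y = 0 := by
    linear_combination h1 t - σ t * h2
  rcases mul_eq_zero.1 h3 with h | h
  · exact absurd (sub_eq_zero.1 h).symm ht
  · exact h

/-- The lines on the Fermat surface through `c`. -/
def LinesThru {k : Type*} [Field k] (X : Set (Fin 4 → k)) (c : Submodule k (Fin 4 → k)) :
    Set (Submodule k (Fin 4 → k)) := {L | IsLineOn X L ∧ c ≤ L}

lemma two_lines {k : Type*} [Field k] [IsAlgClosed k] (q : ℕ) (hq1 : 1 < q)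
    (σ : k →+* k) (hσ : ∀ x, σ x = x ^ q) (c : Fin 4 → k) (hc : c ≠ 0)
    (L M : Submodule k (Fin 4 → k))
    (hL : L ∈ LinesThru (extremalCone k q 1) (Submodule.span k {c}))
    (hM : M ∈ LinesThru (extremalCone k q 1) (Submodule.span k {c})) (hLM : L ≠ M) :
    fB σ 1 c c = 0 ∧ ∃ ν : k, ν ≠ 0 ∧ ∀ i, σ (σ (ν * c i)) = ν * c i := by
  have hLi := isotropic_polar q hq1 σ hσ L fun x hx => (mem_fermat q σ hσ x).1 (hL.1.2 hx)
  have hMi := isotropic_polar q hq1 σ hσ M fun x hx => (mem_fermat q σ hσ x).1 (hM.1.2 hx)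
  have hcL : c ∈ L := hL.2 (Submodule.mem_span_singleton_self c)
  have hcM : c ∈ M := hM.2 (Submodule.mem_span_singleton_self c)
  have hL2 : finrank k L = 2 := hL.1.1
  have hM2 : finrank k M = 2 := hM.1.1
  have hlt : L < L ⊔ M := by
    refine lt_of_le_of_ne le_sup_left fun h => hLM ?_
    have : M ≤ L := by rw [h]; exact le_sup_right
    exact (Submodule.eq_of_le_of_finrank_eq this (by omega)).symm
  have h3 := Submodule.finrank_lt_finrank_of_lt hlt
  have hker : L ⊔ M ≤ LinearMap.ker (fB σ 1 c) := by
    refine sup_le ?_ ?_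
    · intro x hx; exact hLi c hcL x hx
    · intro x hx; exact hMi c hcM x hx
  have heq : L ⊔ M = LinearMap.ker (fB σ 1 c) := by
    apply Submodule.eq_of_le_of_finrank_le hker
    rw [finrank_ker_fB σ c hc]; omega
  refine ⟨hLi c hcL c hcL, ?_⟩
  obtain ⟨μ, hμ⟩ := key2 σ c hc c (by
    intro v hv
    have : v ∈ L ⊔ M := by rw [heq]; exact hv
    obtain ⟨x, hx, y, hy, rfl⟩ := Submodule.mem_sup.1 this
    simp [hLi x hx c hcL, hMi y hy c hcM])
  have hμ0 : μ ≠ 0 := by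
    rintro rfl
    apply hc
    ext i
    rw [hμ i]; simp
  have hq2 : 1 < q ^ 2 := Nat.one_lt_pow (by omega) hq1
  obtain ⟨ν, hν⟩ := IsAlgClosed.exists_pow_nat_eq μ (n := q ^ 2 - 1) (by omega)
  have hν0 : ν ≠ 0 := by
    rintro rfl
    rw [zero_pow (by omega)] at hν
    exact hμ0 hν.symm
  refine ⟨ν, hν0, fun i => ?_⟩
  have : σ (σ ν) = ν * μ := by
    rw [hσ, hσ, ← pow_mul, ← hν, ← pow_succ', ← sq]
    congr 1; omega
  rw [map_mul, map_mul, this, mul_assoc, ← hμ i]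

lemma finrank_pair {k : Type*} [Field k] (c w : Fin 4 → k) (hc : c ≠ 0) (hw : w ∉ Submodule.span k {c}) :
    finrank k (Submodule.span k {c, w}) = 2 := by
  have h : LinearIndependent k ![c, w] := by
    rw [LinearIndependent.pair_iff' hc]
    intro a ha
    exact hw (Submodule.mem_span_singleton.2 ⟨a, ha⟩)
  have := finrank_span_eq_card h
  rw [show Set.range ![c, w] = {c, w} by simp [Matrix.range_cons, Set.pair_comm]] at this
  simpa using this

lemma binary_roots {k : Type*} [Field k] [IsAlgClosed k] (q : ℕ) (hq1 : 1 < q) (hq : (q : k) = 0)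
    (a b d : k) (ha : a ≠ 0) (hd : d ≠ 0) : {t : k | a * t ^ (q+1) + b * t + d = 0}.ncard = q + 1 := by
  classical
  set f : Polynomial k := Polynomial.C a * Polynomial.X ^ (q+1) + Polynomial.C b * Polynomial.X + Polynomial.C d with hf
  have hdeg : f.natDegree = q + 1 := by
    rw [hf, Polynomial.natDegree_add_C, Polynomial.natDegree_add_eq_left_of_natDegree_lt,
      Polynomial.natDegree_C_mul_X_pow _ _ ha]
    rw [Polynomial.natDegree_C_mul_X_pow _ _ ha]
    have := Polynomial.natDegree_C_mul_X_pow_le b 1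
    rw [pow_one] at this
    omega
  have hs : f.Separable := by
    rw [Polynomial.separable_def]
    refine ⟨Polynomial.C d⁻¹, - Polynomial.C d⁻¹ * Polynomial.X, ?_⟩
    have h1 : f.derivative = Polynomial.C a * Polynomial.X ^ q + Polynomial.C b := by
      rw [hf]; simp [hq, Polynomial.derivative_pow]
    have h2 : Polynomial.C d⁻¹ * Polynomial.C d = 1 := by
      rw [← Polynomial.C_mul, inv_mul_cancel₀ hd]; simp
    rw [h1, hf]
    linear_combination h2
  have h0 : f ≠ 0 := by
    intro h; rw [h] at hdeg; simp at hdeg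
  have := card_roots_sep f hs
  rw [hdeg] at this
  have hset : {t : k | a * t ^ (q+1) + b * t + d = 0} = (f.roots.toFinset : Set k) := by
    ext t
    simp only [Finset.mem_coe, Multiset.mem_toFinset, Polynomial.mem_roots h0, Polynomial.IsRoot.def]
    simp [hf]
  rw [hset, Set.ncard_coe_finset, this]

lemma star_lines {k : Type*} [Field k] [IsAlgClosed k] (q : ℕ) (hq1 : 1 < q) (hq : (q : k) = 0)
    (σ : k →+* k) (hσ : ∀ x, σ x = x ^ q) (c : Fin 4 → k) (hc : c ≠ 0)
    (hcK : ∀ i, σ (σ (c i)) = c i) (hcc : fB σ 1 c c = 0) :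
    (LinesThru (extremalCone k q 1) (Submodule.span k {c})).ncard = q + 1 := by
  set H := LinearMap.ker (fB σ 1 c) with hH
  have hHr : finrank k H = 3 := finrank_ker_fB σ c hc
  have hcH : c ∈ H := hcc
  have hcH' : ∀ v ∈ H, fB σ 1 v c = 0 := by
    intro v hv
    rw [fB_herm σ c hcK, show fB σ 1 c v = 0 from hv, map_zero]
  have hspan1 : finrank k (Submodule.span k {c}) = 1 := finrank_span_singleton hc
  obtain ⟨u, huH, hu⟩ : ∃ u ∈ H, fB σ 1 u u ≠ 0 := by
    by_contra! hcon
    have hpol := isotropic_polar q hq1 σ hσ H hcon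
    have : H ≤ Submodule.span k {c} := by
      intro y hy
      obtain ⟨μ, hμ⟩ := key1 σ c hc y (fun v hv => hpol y hy v hv)
      exact Submodule.mem_span_singleton.2 ⟨μ, hμ.symm⟩
    have := Submodule.finrank_mono this
    omega
  have huc : u ∉ Submodule.span k {c} := by
    intro h
    obtain ⟨a, rfl⟩ := Submodule.mem_span_singleton.1 h
    apply hu
    simp [hcc]
  have hcu := finrank_pair c u hc huc
  obtain ⟨w', hw'H, hw'⟩ : ∃ w ∈ H, w ∉ Submodule.span k {c, u} := by
    by_contra! hcon
    have := Submodule.finrank_mono (show H ≤ Submodule.span k {c, u} from hcon)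
    omega
  set w := w' - (fB σ 1 u w' / fB σ 1 u u) • u with hw
  have huw : fB σ 1 u w = 0 := by
    rw [hw]; simp [hu]
  have hwH : w ∈ H := H.sub_mem hw'H (H.smul_mem _ huH)
  have hwn : w ∉ Submodule.span k {c, u} := by
    intro h
    apply hw'
    have : w' = w + (fB σ 1 u w' / fB σ 1 u u) • u := by rw [hw]; abel
    rw [this]
    exact Submodule.add_mem _ h (Submodule.smul_mem _ _ (Submodule.subset_span (by simp)))
  have hHspan : ∀ v ∈ H, ∃ α β γ : k, v = α • c + β • u + γ • w := by
    have hle : Submodule.span k {c, u} ⊔ Submodule.span k {w} ≤ H := by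
      refine sup_le (Submodule.span_le.2 ?_) (Submodule.span_le.2 ?_)
      · rintro x (rfl | rfl)
        · exact hcH
        · exact huH
      · rintro x rfl; exact hwH
    have hlt : Submodule.span k {c, u} < Submodule.span k {c, u} ⊔ Submodule.span k {w} := by
      refine lt_of_le_of_ne le_sup_left fun h => hwn ?_
      rw [h]
      exact Submodule.mem_sup_right (Submodule.mem_span_singleton_self w)
    have h3 := Submodule.finrank_lt_finrank_of_lt hlt
    have heq := Submodule.eq_of_le_of_finrank_le hle (by omega)
    intro v hv
    rw [← heq] at hv
    obtain ⟨x, hx, y, hy, rfl⟩ := Submodule.mem_sup.1 hv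
    obtain ⟨α, β, rfl⟩ := Submodule.mem_span_pair.1 hx
    obtain ⟨γ, rfl⟩ := Submodule.mem_span_singleton.1 hy
    exact ⟨α, β, γ, rfl⟩
  have hcu0 : fB σ 1 c u = 0 := huH
  have hcw0 : fB σ 1 c w = 0 := hwH
  have hww : fB σ 1 w w ≠ 0 := by
    intro h0
    obtain ⟨μ, hμ⟩ := key2 σ c hc w (by
      intro v hv
      obtain ⟨α, β, γ, rfl⟩ := hHspan v hv
      simp [hcw0, huw, h0])
    apply hwn
    have : w = μ • c := by
      ext i; rw [hμ i, hcK]; simp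
    rw [this]
    exact Submodule.smul_mem _ _ (Submodule.subset_span (by simp))
  set Lt : k → Submodule k (Fin 4 → k) := fun t => Submodule.span k {c, w + t • u} with hLt
  have hform : ∀ t, fB σ 1 (w + t • u) (w + t • u) = fB σ 1 u u * t ^ (q+1) + fB σ 1 w u * t + fB σ 1 w w := by
    intro t
    simp [huw, hσ]
    ring
  have hcmem : ∀ t : k, c ∈ Lt t := fun t => Submodule.subset_span (by simp)
  have hwmem : ∀ t : k, w + t • u ∈ Lt t := fun t => Submodule.subset_span (by simp)
  have hwnc : ∀ t : k, w + t • u ∉ Submodule.span k {c} := by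
    intro t h
    apply hwn
    have h1 : w + t • u ∈ Submodule.span k {c, u} := Submodule.span_mono (by simp) h
    have := Submodule.sub_mem _ h1 (Submodule.smul_mem _ t (Submodule.subset_span (show u ∈ ({c, u} : Set (Fin 4 → k)) by simp)))
    simpa using this
  have himg : LinesThru (extremalCone k q 1) (Submodule.span k {c}) =
      Lt '' {t | fB σ 1 u u * t ^ (q+1) + fB σ 1 w u * t + fB σ 1 w w = 0} := by
    ext L
    constructor
    · rintro ⟨⟨hL2, hLX⟩, hcL⟩
      have hL2' : finrank k L = 2 := hL2
      have hcL' : c ∈ L := hcL (Submodule.mem_span_singleton_self c)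
      have hLi' : ∀ x ∈ L, fB σ 1 x x = 0 := fun x hx => (mem_fermat q σ hσ x).1 (hLX hx)
      have hLi := isotropic_polar q hq1 σ hσ L hLi'
      have huL : u ∉ L := fun h => hu (hLi' u h)
      obtain ⟨v, hvL, hv⟩ : ∃ v ∈ L, v ∉ Submodule.span k {c} := by
        by_contra! hcon
        have := Submodule.finrank_mono (show L ≤ Submodule.span k {c} from hcon)
        omega
      obtain ⟨α, β, γ, rfl⟩ := hHspan v (hLi c hcL' v hvL)
      have h1 : β • u + γ • w ∈ L := by
        have := L.sub_mem hvL (L.smul_mem α hcL')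
        convert this using 1
        abel
      have hγ : γ ≠ 0 := by
        rintro rfl
        simp only [zero_smul, add_zero] at h1 hv
        by_cases hβ : β = 0
        · apply hv
          rw [hβ]; simp [Submodule.smul_mem, Submodule.mem_span_singleton_self]
        · exact huL ((L.smul_mem_iff hβ).1 h1)
      have h2 : w + (β / γ) • u ∈ L := by
        have := L.smul_mem γ⁻¹ h1
        convert this using 1
        rw [smul_add, smul_smul, smul_smul, inv_mul_cancel₀ hγ, one_smul, add_comm, div_eq_inv_mul]
      refine ⟨β / γ, ?_, ?_⟩
      · have := hLi' _ h2
        rw [hform] at this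
        exact this
      · apply Submodule.eq_of_le_of_finrank_eq
        · rw [hLt, Submodule.span_le]
          rintro x (rfl | rfl)
          · exact hcL'
          · exact h2
        · rw [hL2', hLt]
          exact finrank_pair c _ hc (hwnc _)
    · rintro ⟨t, ht, rfl⟩
      have ht' : fB σ 1 (w + t • u) (w + t • u) = 0 := by rw [hform]; exact ht
      have hwtH : w + t • u ∈ H := H.add_mem hwH (H.smul_mem _ huH)
      have h3 : fB σ 1 c (w + t • u) = 0 := hwtH
      have h4 := hcH' _ hwtH
      refine ⟨⟨finrank_pair c _ hc (hwnc _), ?_⟩, ?_⟩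
      · intro x hx
        obtain ⟨α, β, rfl⟩ := Submodule.mem_span_pair.1 hx
        rw [mem_fermat q σ hσ]
        simp only [map_add, LinearMap.add_apply, LinearMap.map_smulₛₗ, LinearMap.smul_apply] at h3 h4 ht' ⊢
        simp only [map_smul, smul_eq_mul, RingHom.id_apply] at h3 h4 ht' ⊢
        linear_combination (σ α * α) * hcc + (σ α * β) * h3 + (σ β * α) * h4 + σ β * β * ht'
      · rw [Submodule.span_le]
        rintro x rfl
        exact hcmem t
  rw [himg, Set.ncard_image_of_injOn, binary_roots q hq1 hq _ _ _ hu hww]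
  intro t ht s hs hts
  by_contra hne
  have h1 := hwmem t
  have h2 := hwmem s
  rw [← hts] at h2
  have h3 := (Lt t).sub_mem h1 h2
  have h4 : w + t • u - (w + s • u) = (t - s) • u := by rw [sub_smul]; abel
  rw [h4, Submodule.smul_mem_iff _ (sub_ne_zero.2 hne)] at h3
  have h5 : Lt t ∈ LinesThru (extremalCone k q 1) (Submodule.span k {c}) := by
    rw [himg]; exact ⟨t, ht, rfl⟩
  exact hu ((mem_fermat q σ hσ u).1 (h5.1.2 h3))

lemma card_conv {k : Type*} [Field k] [DecidableEq k] {ι κ : Type*} (S : Finset ι) (T : Finset κ)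
    (f : ι → k) (g : κ → k) (b : k) (α β : ℕ)
    (h : ∀ s ∈ S, (T.filter (fun t => g t = b - f s)).card = if f s = b then α else β) :
    ((S ×ˢ T).filter (fun x => f x.1 + g x.2 = b)).card =
      (S.filter (fun s => f s = b)).card * α + (S.card - (S.filter (fun s => f s = b)).card) * β := by
  rw [Finset.card_filter, Finset.sum_product]
  have h1 : ∀ s ∈ S, ∑ y ∈ T, (if f (s, y).1 + g (s, y).2 = b then 1 else 0) = if f s = b then α else β := by
    intro s hs
    rw [← h s hs, Finset.card_filter]
    apply Finset.sum_congr rfl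
    intro t _
    simp only [eq_sub_iff_add_eq, add_comm]
  rw [Finset.sum_congr rfl h1, Finset.sum_ite]
  have h2 := Finset.card_filter_add_card_filter_not (s := S) (fun s => f s = b)
  simp only [Finset.sum_const, smul_eq_mul]
  congr 2
  omega

section counting

variable {k : Type*} [Field k] [IsAlgClosed k]

lemma norm_fix (q : ℕ) (hq1 : 1 < q) (σ : k →+* k) (hσ : ∀ x, σ x = x ^ q) (x : k) (hx : x ∈ KF k q) :
    σ (σ x * x) = σ x * x := by
  rw [mem_KF q hq1 σ hσ] at hx
  rw [map_mul, hx, mul_comm]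

lemma count1 [DecidableEq k] (q : ℕ) (hq1 : 1 < q) (hq : (q : k) = 0) (σ : k →+* k) (hσ : ∀ x, σ x = x ^ q)
    (b : k) (hb : σ b = b) :
    ((KF k q).filter (fun x => σ x * x = b)).card = if b = 0 then 1 else q + 1 := by
  split_ifs with h
  · subst h
    rw [Finset.card_eq_one]
    refine ⟨0, ?_⟩
    ext x
    simp [mem_KF q hq1 σ hσ]
    rintro rfl; simp
  · have := binary_roots q hq1 hq (1:k) 0 (-b) one_ne_zero (neg_ne_zero.2 h)
    rw [← this, ← Set.ncard_coe_finset]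
    congr 1
    ext x
    simp only [Finset.coe_filter, mem_KF q hq1 σ hσ, Set.mem_ofPred_eq]
    have e1 : (1 * x ^ (q+1) + 0 * x + -b = 0) ↔ σ x * x = b := by
      rw [hσ, ← sub_eq_zero (b := b)]; ring_nf
    rw [e1]
    constructor
    · exact fun h => h.2
    · intro hx
      refine ⟨?_, hx⟩
      have hx0 : σ x ≠ 0 := by
        intro h0; rw [h0, zero_mul] at hx; exact h hx.symm
      have h2 : σ (σ x * x) = σ x * x := by rw [hx, hb]
      rw [map_mul, mul_comm] at h2
      exact mul_left_cancel₀ hx0 h2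

lemma count2 [DecidableEq k] (q : ℕ) (hq1 : 1 < q) (hq : (q : k) = 0) (σ : k →+* k) (hσ : ∀ x, σ x = x ^ q)
    (b : k) (hb : σ b = b) :
    ((KF k q ×ˢ KF k q).filter (fun x => σ x.1 * x.1 + σ x.2 * x.2 = b)).card =
      if b = 0 then 1 + (q ^ 2 - 1) * (q + 1) else (q + 1) + (q ^ 2 - (q + 1)) * (q + 1) := by
  rw [card_conv (KF k q) (KF k q) (fun x => σ x * x) (fun x => σ x * x) b 1 (q+1)]
  · rw [count1 q hq1 hq σ hσ b hb, card_KF q hq1 hq]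
    split_ifs <;> simp
  · intro s hs
    rw [count1 q hq1 hq σ hσ _ (by rw [map_sub, hb, norm_fix q hq1 σ hσ s hs])]
    by_cases h : b = σ s * s
    · simp [← h]
    · rw [if_neg (sub_ne_zero.2 h), if_neg (Ne.symm h)]

lemma count4 [DecidableEq k] (q : ℕ) (hq1 : 1 < q) (hq : (q : k) = 0) (σ : k →+* k) (hσ : ∀ x, σ x = x ^ q) :
    (((KF k q ×ˢ KF k q) ×ˢ (KF k q ×ˢ KF k q)).filter
      (fun x => (σ x.1.1 * x.1.1 + σ x.1.2 * x.1.2) + (σ x.2.1 * x.2.1 + σ x.2.2 * x.2.2) = 0)).card =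
      (q ^ 2 - 1) * ((q ^ 3 + 1) * (q ^ 2 + 1)) + 1 := by
  rw [card_conv (KF k q ×ˢ KF k q) (KF k q ×ˢ KF k q) (fun x => σ x.1 * x.1 + σ x.2 * x.2)
    (fun x => σ x.1 * x.1 + σ x.2 * x.2) 0 (1 + (q ^ 2 - 1) * (q + 1)) ((q + 1) + (q ^ 2 - (q + 1)) * (q + 1))]
  · rw [count2 q hq1 hq σ hσ 0 (by simp), Finset.card_product, card_KF q hq1 hq]
    obtain ⟨n, rfl⟩ : ∃ n, q = n + 2 := ⟨q - 2, by omega⟩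
    simp only [if_true]
    have e1 : (n + 2) ^ 2 - 1 = n ^ 2 + 4 * n + 3 := by
      rw [Nat.sub_eq_iff_eq_add (by nlinarith)]; ring
    have e2 : (n + 2) ^ 2 - (n + 2 + 1) = n ^ 2 + 3 * n + 1 := by
      rw [Nat.sub_eq_iff_eq_add (by nlinarith)]; ring
    rw [e1, e2]
    have e3 : (n + 2) ^ 2 * (n + 2) ^ 2 - (1 + (n ^ 2 + 4 * n + 3) * (n + 2 + 1)) =
        n ^ 4 + 7 * n ^ 3 + 17 * n ^ 2 + 17 * n + 6 := by
      rw [Nat.sub_eq_iff_eq_add (by ring_nf; nlinarith [sq_nonneg (n^2)])]; ring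
    rw [e3]
    ring
  · rintro ⟨x, y⟩ hs
    rw [Finset.mem_product] at hs
    rw [count2 q hq1 hq σ hσ]
    · simp only [zero_sub, neg_eq_zero]
    · simp only [map_sub, map_zero, map_add, norm_fix q hq1 σ hσ x hs.1, norm_fix q hq1 σ hσ y hs.2]

/-- nonzero isotropic vectors over the field with `q^2` elements -/
def isoVec (σ : k →+* k) : Set (Fin 4 → k) :=
  {c | c ≠ 0 ∧ (∀ i, σ (σ (c i)) = c i) ∧ fB σ 1 c c = 0}

lemma count_isoVec (q : ℕ) (hq1 : 1 < q) (hq : (q : k) = 0) (σ : k →+* k) (hσ : ∀ x, σ x = x ^ q) :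
    (isoVec σ).Finite ∧ (isoVec σ).ncard = (q ^ 2 - 1) * ((q ^ 3 + 1) * (q ^ 2 + 1)) := by
  classical
  set F := (((KF k q ×ˢ KF k q) ×ˢ (KF k q ×ˢ KF k q)).filter
      (fun x => (σ x.1.1 * x.1.1 + σ x.1.2 * x.1.2) + (σ x.2.1 * x.2.1 + σ x.2.2 * x.2.2) = 0)) with hF
  set m : (k × k) × (k × k) → (Fin 4 → k) := fun x => ![x.1.1, x.1.2, x.2.1, x.2.2] with hm
  have hminj : Function.Injective m := by
    rintro ⟨⟨a, b⟩, ⟨c, d⟩⟩ ⟨⟨a', b'⟩, ⟨c', d'⟩⟩ h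
    have h0 := congrFun h 0
    have h1 := congrFun h 1
    have h2 := congrFun h 2
    have h3 := congrFun h 3
    simp [hm] at h0 h1 h2 h3
    simp [h0, h1, h2, h3]
  have heq : isoVec σ = (((F.image m).erase 0 : Finset (Fin 4 → k)) : Set (Fin 4 → k)) := by
    ext c
    simp only [isoVec, Set.mem_ofPred_eq, Finset.coe_erase, Set.mem_sdiff, Set.mem_singleton_iff, Finset.mem_coe,
      Finset.mem_image, hF, Finset.mem_filter, Finset.mem_product, mem_KF q hq1 σ hσ, fB_one]
    constructor
    · rintro ⟨h0, hc, hs⟩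
      refine ⟨⟨((c 0, c 1), (c 2, c 3)), ⟨⟨⟨hc 0, hc 1⟩, hc 2, hc 3⟩, ?_⟩, ?_⟩, h0⟩
      · rw [Fin.sum_univ_four] at hs
        linear_combination hs
      · ext i; fin_cases i <;> rfl
    · rintro ⟨⟨⟨⟨a, b⟩, ⟨d, e⟩⟩, ⟨⟨⟨h1, h2⟩, h3, h4⟩, hs⟩, rfl⟩, h0⟩
      refine ⟨h0, ?_, ?_⟩
      · intro i; fin_cases i <;> simp [hm] <;> assumption
      · rw [Fin.sum_univ_four]
        simp [hm]
        simp at hs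
        linear_combination hs
  refine ⟨by rw [heq]; exact Finset.finite_toSet _, ?_⟩
  rw [heq, Set.ncard_coe_finset, Finset.card_erase_of_mem, Finset.card_image_of_injective _ hminj, hF,
    count4 q hq1 hq σ hσ]
  · simp
  · rw [Finset.mem_image]
    refine ⟨((0,0),(0,0)), ?_, ?_⟩
    · simp [hF, mem_KF q hq1 σ hσ]
    · ext i; fin_cases i <;> rfl

lemma count_isoPoints (q : ℕ) (hq1 : 1 < q) (hq : (q : k) = 0) (σ : k →+* k) (hσ : ∀ x, σ x = x ^ q) :
    ((fun c : Fin 4 → k => Submodule.span k {c}) '' isoVec σ).ncard = (q ^ 3 + 1) * (q ^ 2 + 1) := by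
  classical
  obtain ⟨hfin, hcard⟩ := count_isoVec q hq1 hq σ hσ
  set T := hfin.toFinset with hT
  have hTc : (T : Set (Fin 4 → k)) = isoVec σ := by simp [hT]
  have hmem : ∀ x, x ∈ T ↔ x ∈ isoVec σ := by simp [hT]
  rw [← hTc, ← Finset.coe_image, Set.ncard_coe_finset]
  rw [← hTc, Set.ncard_coe_finset] at hcard
  have hq2 : 1 < q ^ 2 := Nat.one_lt_pow (by omega) hq1
  have h1 := Finset.card_eq_sum_card_image (fun c : Fin 4 → k => Submodule.span k {c}) T
  rw [Finset.sum_congr rfl (g := fun _ => q ^ 2 - 1), Finset.sum_const, smul_eq_mul, hcard, mul_comm] at h1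
  · exact (Nat.eq_of_mul_eq_mul_right (by omega) h1).symm
  · intro b hb
    obtain ⟨c, hc, rfl⟩ := Finset.mem_image.1 hb
    rw [hmem] at hc
    obtain ⟨hc0, hcK, hcc⟩ := hc
    have h2 : T.filter (fun a => Submodule.span k {a} = Submodule.span k {c}) =
        ((KF k q).erase 0).image (fun l => l • c) := by
      ext a
      simp only [Finset.mem_filter, hmem, Finset.mem_image, Finset.mem_erase, mem_KF q hq1 σ hσ]
      constructor
      · rintro ⟨⟨ha0, haK, _⟩, hac⟩
        have : a ∈ Submodule.span k {c} := by rw [← hac]; exact Submodule.mem_span_singleton_self a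
        obtain ⟨l, rfl⟩ := Submodule.mem_span_singleton.1 this
        refine ⟨l, ⟨?_, ?_⟩, rfl⟩
        · rintro rfl; simp at ha0
        · obtain ⟨j, hj⟩ := Function.ne_iff.1 hc0
          have := haK j
          simp only [Pi.smul_apply, smul_eq_mul, map_mul, hcK] at this
          exact mul_right_cancel₀ hj this
      · rintro ⟨l, ⟨hl0, hl⟩, rfl⟩
        refine ⟨⟨smul_ne_zero hl0 hc0, ?_, ?_⟩, ?_⟩
        · intro i; simp [hl, hcK]
        · simp [hcc]
        · exact Submodule.span_singleton_smul_eq (IsUnit.mk0 l hl0) c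
    rw [h2, Finset.card_image_of_injective _ (smul_left_injective k hc0), Finset.card_erase_of_mem, card_KF q hq1 hq]
    simp [mem_KF q hq1 σ hσ]

lemma starPoints_eq (q : ℕ) (hq1 : 1 < q) (hq : (q : k) = 0) (σ : k →+* k) (hσ : ∀ x, σ x = x ^ q) :
    {c : Submodule k (Fin 4 → k) | IsStarPoint q (extremalCone k q 1) c} =
      (fun c : Fin 4 → k => Submodule.span k {c}) '' isoVec σ := by
  ext c
  constructor
  · rintro ⟨S, hc1, hS, hSl⟩
    obtain ⟨v, hv0, hv⟩ := finrank_eq_one_iff'.1 (show finrank k c = 1 from hc1)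
    have hcv : c = Submodule.span k {(v : Fin 4 → k)} := by
      apply le_antisymm
      · intro x hx
        obtain ⟨a, ha⟩ := hv ⟨x, hx⟩
        exact Submodule.mem_span_singleton.2 ⟨a, congrArg Subtype.val ha⟩
      · rw [Submodule.span_le]
        rintro x rfl
        exact v.2
    have hv0' : (v : Fin 4 → k) ≠ 0 := by simpa using hv0
    obtain ⟨L, M, hL, hM, hLM⟩ := (Set.one_lt_ncard_iff (Set.finite_of_ncard_pos (by omega))).1
      (show 1 < S.ncard by omega)
    rw [hcv] at hSl
    obtain ⟨hcc, ν, hν0, hν⟩ := two_lines q hq1 σ hσ v hv0' L M (hSl L hL) (hSl M hM) hLM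
    refine ⟨ν • (v : Fin 4 → k), ⟨smul_ne_zero hν0 hv0', hν, by simp [hcc]⟩, ?_⟩
    exact (Submodule.span_singleton_smul_eq (IsUnit.mk0 ν hν0) _).trans hcv.symm
  · rintro ⟨v, ⟨hv0, hvK, hvv⟩, rfl⟩
    exact ⟨LinesThru (extremalCone k q 1) (Submodule.span k {v}), finrank_span_singleton hv0,
      star_lines q hq1 hq σ hσ v hv0 hvK hvv, fun L hL => hL⟩

lemma stars_eq (q : ℕ) (hq1 : 1 < q) (hq : (q : k) = 0) (σ : k →+* k) (hσ : ∀ x, σ x = x ^ q) :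
    {S : Set (Submodule k (Fin 4 → k)) | IsStar q (extremalCone k q 1) S}.ncard =
    {c : Submodule k (Fin 4 → k) | IsStarPoint q (extremalCone k q 1) c}.ncard := by
  have hcard : ∀ c, IsStarPoint q (extremalCone k q 1) c → IsPoint c ∧ (LinesThru (extremalCone k q 1) c).ncard = q + 1 := by
    intro c hc
    have : c ∈ {c : Submodule k (Fin 4 → k) | IsStarPoint q (extremalCone k q 1) c} := hc
    rw [starPoints_eq q hq1 hq σ hσ] at this
    obtain ⟨v, ⟨hv0, hvK, hvv⟩, rfl⟩ := this
    exact ⟨finrank_span_singleton hv0, star_lines q hq1 hq σ hσ v hv0 hvK hvv⟩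
  have himg : {S : Set (Submodule k (Fin 4 → k)) | IsStar q (extremalCone k q 1) S} =
      LinesThru (extremalCone k q 1) '' {c : Submodule k (Fin 4 → k) | IsStarPoint q (extremalCone k q 1) c} := by
    ext S
    constructor
    · rintro ⟨c, hc⟩
      have hcS : IsStarPoint q (extremalCone k q 1) c := ⟨S, hc⟩
      have h1 := (hcard c hcS).2
      refine ⟨c, hcS, (Set.eq_of_subset_of_ncard_le (show S ⊆ LinesThru (extremalCone k q 1) c from fun L hL => hc.2.2 L hL) ?_ ?_).symm⟩
      · rw [h1, hc.2.1]
      · exact Set.finite_of_ncard_pos (by omega)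
    · rintro ⟨c, hc, rfl⟩
      exact ⟨c, (hcard c hc).1, (hcard c hc).2, fun L hL => hL⟩
  rw [himg, Set.ncard_image_of_injOn]
  intro c hc d hd hcd
  have h1 := (hcard c hc).2
  obtain ⟨L, M, hL, hM, hLM⟩ := (Set.one_lt_ncard_iff (Set.finite_of_ncard_pos (by omega))).1
      (show 1 < (LinesThru (extremalCone k q 1) c).ncard by omega)
  have hL' := hL
  have hM' := hM
  rw [hcd] at hL' hM'
  have hL2 : finrank k L = 2 := hL.1.1
  have hM2 : finrank k M = 2 := hM.1.1
  have hlt : L ⊓ M < L := by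
    refine lt_of_le_of_ne inf_le_left fun h => hLM ?_
    exact Submodule.eq_of_le_of_finrank_eq (inf_eq_left.1 h) (by omega)
  have h3 := Submodule.finrank_lt_finrank_of_lt hlt
  have hc1 : finrank k c = 1 := (hcard c hc).1
  have hd1 : finrank k d = 1 := (hcard d hd).1
  rw [Submodule.eq_of_le_of_finrank_le (le_inf hL.2 hM.2) (by omega),
    Submodule.eq_of_le_of_finrank_le (le_inf hL'.2 hM'.2) (by omega)]

end counting

lemma transport {k : Type*} [Field k] (q : ℕ) (g : (Fin 4 → k) ≃ₗ[k] (Fin 4 → k)) (X Y : Set (Fin 4 → k))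
    (h : ∀ x ∈ X, g x ∈ Y) (S : Set (Submodule k (Fin 4 → k))) (c : Submodule k (Fin 4 → k))
    (hs : IsStarAt q X S c) :
    IsStarAt q Y (Submodule.map (g : (Fin 4 → k) →ₗ[k] (Fin 4 → k)) '' S)
      (Submodule.map (g : (Fin 4 → k) →ₗ[k] (Fin 4 → k)) c) := by
  obtain ⟨hc, hS, hl⟩ := hs
  refine ⟨?_, ?_, ?_⟩
  · exact (LinearEquiv.finrank_map_eq g c).trans hc
  · rw [Set.ncard_image_of_injective _ (Submodule.map_injective_of_injective g.injective), hS]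
  · rintro _ ⟨L, hL, rfl⟩
    obtain ⟨⟨h1, h2⟩, h3⟩ := hl L hL
    refine ⟨⟨(LinearEquiv.finrank_map_eq g L).trans h1, ?_⟩, Submodule.map_mono h3⟩
    rintro _ ⟨x, hx, rfl⟩
    exact h x (h2 hx)

/-- A smooth extremal surface `X` of degree `q+1` in ℙ³(k)
has exactly `(q³+1)(q²+1) = q⁵+q³+q²+1` stars; equivalently (each star point
being the center of exactly one star) exactly `(q³+1)(q²+1)` star points. -/
theorem count_stars {k : Type*} [Field k] [IsAlgClosed k]
    (p e q : ℕ) (hp : p.Prime) (hchar : CharP k p) (he : 1 ≤ e) (hq : q = p ^ e)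
    (A : Matrix (Fin 4) (Fin 4) k) (hA : IsUnit A) :
    {S : Set (Submodule k (Fin 4 → k)) | IsStar q (extremalCone k q A) S}.ncard
        = (q ^ 3 + 1) * (q ^ 2 + 1) ∧
    {c : Submodule k (Fin 4 → k) | IsStarPoint q (extremalCone k q A) c}.ncard
        = (q ^ 3 + 1) * (q ^ 2 + 1) := by
  have : Fact p.Prime := ⟨hp⟩
  have : ExpChar k p := ExpChar.prime hp
  have hq1 : 1 < q := by rw [hq]; exact Nat.one_lt_pow (by omega) hp.one_lt
  have hqk : (q : k) = 0 := by
    rw [hq, Nat.cast_pow, CharP.cast_eq_zero, zero_pow (by omega)]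
  let σ : k →+* k := iterateFrobenius k p e
  have hσ : ∀ x, σ x = x ^ q := fun x => by rw [hq]; exact iterateFrobenius_def p e x
  obtain ⟨g, hg⟩ := exists_fermat q hq1 hqk σ hσ A hA
  have h1 : ∀ x ∈ extremalCone k q 1, g x ∈ extremalCone k q A := fun x hx => (hg x).trans hx
  have h2 : ∀ x ∈ extremalCone k q A, g.symm x ∈ extremalCone k q 1 := fun x hx => by
    have := hg (g.symm x)
    rw [g.apply_symm_apply] at this
    exact this.symm.trans hx
  set G : Submodule k (Fin 4 → k) → Submodule k (Fin 4 → k) :=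
    Submodule.map (g : (Fin 4 → k) →ₗ[k] (Fin 4 → k)) with hG
  set G' : Submodule k (Fin 4 → k) → Submodule k (Fin 4 → k) :=
    Submodule.map (g.symm : (Fin 4 → k) →ₗ[k] (Fin 4 → k)) with hG'
  have hGG : ∀ L, G (G' L) = L := fun L => by
    rw [hG, hG', ← Submodule.map_comp]
    simp
  have hGi : Function.Injective G := Submodule.map_injective_of_injective g.injective
  have hpts : {c : Submodule k (Fin 4 → k) | IsStarPoint q (extremalCone k q A) c} =
      G '' {c : Submodule k (Fin 4 → k) | IsStarPoint q (extremalCone k q 1) c} := by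
    ext c
    constructor
    · rintro ⟨S, hS⟩
      exact ⟨G' c, ⟨G' '' S, transport q g.symm _ _ h2 S c hS⟩, hGG c⟩
    · rintro ⟨c, ⟨S, hS⟩, rfl⟩
      exact ⟨G '' S, transport q g _ _ h1 S c hS⟩
  have hstars : {S : Set (Submodule k (Fin 4 → k)) | IsStar q (extremalCone k q A) S} =
      (Set.image G) '' {S : Set (Submodule k (Fin 4 → k)) | IsStar q (extremalCone k q 1) S} := by
    ext S
    constructor
    · rintro ⟨c, hS⟩
      refine ⟨G' '' S, ⟨G' c, transport q g.symm _ _ h2 S c hS⟩, ?_⟩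
      rw [Set.image_image]
      simp [hGG]
    · rintro ⟨S, ⟨c, hS⟩, rfl⟩
      exact ⟨G c, transport q g _ _ h1 S c hS⟩
  rw [hpts, hstars, Set.ncard_image_of_injective _ hGi,
    Set.ncard_image_of_injective _ hGi.image_injective, stars_eq q hq1 hqk σ hσ,
    starPoints_eq q hq1 hqk σ hσ, count_isoPoints q hq1 hqk σ hσ]
  exact ⟨rfl, rfl⟩
end

section
/- Let X be a smooth extremal surface of degree d = q+1 ≥ 5 in ℙ³(k). Then the number N of double 2d's all of whose 4d lines lie on X satisfies 16·N ≥ (q³+1)(q²+1)(q−1)²q⁷. -/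
open Module

/-- A double `2d`: a pair of sets `𝒜`, `ℬ`, each consisting of `2d` lines in
ℙ³(k), such that the lines within `𝒜` are pairwise skew, the lines within `ℬ`
are pairwise skew, each line of `𝒜` meets exactly `d+2` lines of `ℬ`, and
each line of `ℬ` meets exactly `d+2` lines of `𝒜`. -/
def IsDoubleTwoD {k : Type*} [Field k] (d : ℕ)
    (𝒜 ℬ : Set (Submodule k (Fin 4 → k))) : Prop :=
  𝒜.ncard = 2 * d ∧ ℬ.ncard = 2 * d ∧
  (∀ L ∈ 𝒜, IsLine L) ∧ (∀ L ∈ ℬ, IsLine L) ∧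
  (∀ L ∈ 𝒜, ∀ M ∈ 𝒜, L ≠ M → SkewLine L M) ∧
  (∀ L ∈ ℬ, ∀ M ∈ ℬ, L ≠ M → SkewLine L M) ∧
  (∀ L ∈ 𝒜, {M ∈ ℬ | MeetsLine L M}.ncard = d + 2) ∧
  (∀ M ∈ ℬ, {L ∈ 𝒜 | MeetsLine L M}.ncard = d + 2)


theorem lang_exists {k : Type*} [Field k] [IsAlgClosed k] {V : Type*} [AddCommGroup V]
    [Module k V] [FiniteDimensional k V] [Nontrivial V] (Q : ℕ) (hQ : 2 ≤ Q) (Φ : V → V)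
    (hadd : ∀ v w, Φ (v + w) = Φ v + Φ w) (hsmul : ∀ (c : k) v, Φ (c • v) = c ^ Q • Φ v)
    (hinj : ∀ v, Φ v = 0 → v = 0) : ∃ v, v ≠ 0 ∧ Φ v = v := by
  classical
  let Ψ : V →+ V := AddMonoidHom.mk' Φ hadd
  have hΨ : ∀ v, Ψ v = Φ v := fun v => rfl
  obtain ⟨v, hv⟩ := exists_ne (0 : V)
  let u : ℕ → V := fun i => Φ^[i] v
  have hu : ∀ i, Φ (u i) = u (i + 1) := fun i => (Function.iterate_succ_apply' Φ i v).symm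
  have hex : ∃ n, ¬ LinearIndependent k (fun i : Fin n => u i) := by
    refine ⟨finrank k V + 1, fun h => ?_⟩
    have := h.fintype_card_le_finrank
    simp at this
  have hsp := Nat.find_spec hex
  have hmin : ∀ m, m < Nat.find hex → LinearIndependent k (fun i : Fin m => u i) := by
    intro m hm
    have := Nat.find_min hex hm
    simpa using this
  obtain ⟨l, hl⟩ : ∃ l, Nat.find hex = l + 2 := by
    rcases h : Nat.find hex with _ | _ | l
    · rw [h] at hsp; exact absurd (linearIndependent_empty_type) hsp
    · rw [h] at hsp
      refine absurd ?_ hsp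
      exact (linearIndependent_unique_iff (ι := Fin 1) (R := k) (v := fun i : Fin 1 => u i)).2 hv
    · exact ⟨l, rfl⟩
  rw [hl] at hsp hmin
  have h1 := hmin (l + 1) (by omega)
  have hmem : u (l + 1) ∈ Submodule.span k (Set.range (fun i : Fin (l + 1) => u i)) := by
    by_contra hcon
    apply hsp
    rw [linearIndependent_finSucc']
    refine ⟨h1, ?_⟩
    simpa [Fin.init_def] using hcon
  have h2 : u l ∉ Submodule.span k (Set.range (fun i : Fin l => u i)) := by
    have := (linearIndependent_finSucc'.1 h1).2
    simpa [Fin.init_def] using this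
  rw [Submodule.mem_span_range_iff_exists_fun] at hmem
  obtain ⟨c0, hc0⟩ := hmem
  let c : ℕ → k := fun i => if h : i < l + 1 then c0 ⟨i, h⟩ else 0
  have hc : ∑ i ∈ Finset.range (l + 1), c i • u i = u (l + 1) := by
    rw [← hc0, Finset.sum_range]
    refine Finset.sum_congr rfl fun i _ => ?_
    have : c i = c0 i := dif_pos i.2
    rw [this]
  have hsum : ∀ (a : ℕ → k) n, Φ (∑ i ∈ Finset.range n, a i • u i) =
      ∑ i ∈ Finset.range n, a i ^ Q • u (i + 1) := by
    intro a n
    rw [← hΨ, map_sum]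
    refine Finset.sum_congr rfl fun i _ => ?_
    rw [hΨ, hsmul, hu]
  have hspan : ∀ (a : ℕ → k), ∑ i ∈ Finset.range l, a i • u i ∈
      Submodule.span k (Set.range (fun i : Fin l => u i)) := by
    intro a
    refine Submodule.sum_mem _ fun i hi => Submodule.smul_mem _ _ (Submodule.subset_span ?_)
    exact ⟨⟨i, Finset.mem_range.1 hi⟩, rfl⟩
  have hcne : c 0 ≠ 0 := by
    intro h0
    choose d hd using fun i => IsAlgClosed.exists_pow_nat_eq (c (i + 1)) (by omega : 0 < Q)
    apply h2
    have h3 : u l - ∑ i ∈ Finset.range l, d i • u i = 0 := by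
      apply hinj
      rw [← hΨ, map_sub, hΨ, hΨ, hsum, hu, ← hc, Finset.sum_range_succ']
      simp [h0, hd]
    rw [sub_eq_zero.1 h3]
    exact hspan d
  let P : ℕ → Polynomial k := fun i => Nat.rec (Polynomial.C (c 0) * Polynomial.X ^ Q)
    (fun i p => p ^ Q + Polynomial.C (c (i + 1)) * Polynomial.X ^ Q) i
  have hP0 : P 0 = Polynomial.C (c 0) * Polynomial.X ^ Q := rfl
  have hPs : ∀ i, P (i + 1) = P i ^ Q + Polynomial.C (c (i + 1)) * Polynomial.X ^ Q := fun i => rfl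
  have hdeg : ∀ i, 2 ≤ (P i).natDegree := by
    intro i
    induction i with
    | zero => rw [hP0, Polynomial.natDegree_C_mul_X_pow _ _ hcne]; exact hQ
    | succ i ih =>
      rw [hPs, Polynomial.natDegree_add_eq_left_of_natDegree_lt]
      · rw [Polynomial.natDegree_pow]; nlinarith
      · refine lt_of_le_of_lt (Polynomial.natDegree_C_mul_X_pow_le _ _) ?_
        rw [Polynomial.natDegree_pow]; nlinarith
  have hdvd : ∀ i, (Polynomial.X : Polynomial k) ^ 2 ∣ P i := by
    have hXQ : (Polynomial.X : Polynomial k) ^ 2 ∣ Polynomial.X ^ Q := pow_dvd_pow _ hQ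
    intro i
    induction i with
    | zero => rw [hP0]; exact Dvd.dvd.mul_left hXQ _
    | succ i ih =>
      rw [hPs]
      exact dvd_add (dvd_pow ih (by omega)) (Dvd.dvd.mul_left hXQ _)
  obtain ⟨T, hT⟩ := hdvd l
  have hTne : T ≠ 0 := by
    rintro rfl
    have := hdeg l
    rw [hT] at this
    simp at this
  have hroot : ∃ t : k, (Polynomial.X * T - 1).IsRoot t := by
    apply IsAlgClosed.exists_root
    have h3 : (Polynomial.X * T - 1).natDegree = T.natDegree + 1 := by
      rw [Polynomial.natDegree_sub_eq_left_of_natDegree_lt]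
      · exact Polynomial.natDegree_X_mul hTne
      · rw [Polynomial.natDegree_X_mul hTne]; simp
    intro h4
    have := Polynomial.natDegree_eq_of_degree_eq_some (n := 0) h4
    omega
  obtain ⟨t, ht⟩ := hroot
  have ht' : t * T.eval t = 1 := by
    have : t * T.eval t - 1 = 0 := by simpa [Polynomial.IsRoot] using ht
    exact sub_eq_zero.1 this
  have ht0 : t ≠ 0 := by rintro rfl; simp at ht'
  let a : ℕ → k := fun i => (P i).eval t
  have ha0 : a 0 = t ^ Q * c 0 := by simp [a, hP0]; ring
  have has : ∀ i, a (i + 1) = a i ^ Q + t ^ Q * c (i + 1) := by intro i; simp [a, hPs]; ring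
  have hal : a l = t := by
    simp only [a, hT, Polynomial.eval_mul, Polynomial.eval_pow, Polynomial.eval_X]
    rw [pow_two, mul_assoc, ht', mul_one]
  refine ⟨∑ i ∈ Finset.range (l + 1), a i • u i, ?_, ?_⟩
  · intro h0
    apply h2
    rw [Finset.sum_range_succ, hal] at h0
    have h5 : u l = -(t⁻¹ • ∑ i ∈ Finset.range l, a i • u i) := by
      have h6 := eq_neg_of_add_eq_zero_right h0
      rw [← smul_neg, ← h6, smul_smul, inv_mul_cancel₀ ht0, one_smul]
    rw [h5]
    exact Submodule.neg_mem _ (Submodule.smul_mem _ _ (hspan a))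
  · rw [hsum, Finset.sum_range_succ, hal, ← hc, Finset.smul_sum, Finset.sum_range_succ' (fun i => a i • u i),
      Finset.sum_range_succ' (fun i => t ^ Q • c i • u i), ← add_assoc, ← Finset.sum_add_distrib, ha0]
    congr 1
    · refine Finset.sum_congr rfl fun i _ => ?_
      rw [has, add_smul, smul_smul]
    · rw [smul_smul]

theorem lang_span_s7 {k : Type*} [Field k] [IsAlgClosed k] {V : Type*} [AddCommGroup V]
    [Module k V] [FiniteDimensional k V] (Q : ℕ) (hQ : 2 ≤ Q) (Φ : V → V)
    (hadd : ∀ v w, Φ (v + w) = Φ v + Φ w) (hsmul : ∀ (c : k) v, Φ (c • v) = c ^ Q • Φ v)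
    (hinj : ∀ v, Φ v = 0 → v = 0) : Submodule.span k {v | Φ v = v} = ⊤ := by
  classical
  by_contra hne
  set W := Submodule.span k {v | Φ v = v} with hW
  let Ψ : V →+ V := AddMonoidHom.mk' Φ hadd
  have hsub : ∀ v w, Φ (v - w) = Φ v - Φ w := fun v w => map_sub Ψ v w
  have hz : Φ 0 = 0 := map_zero Ψ
  have hroot : ∀ c : k, ∃ d, d ^ Q = c := fun c => IsAlgClosed.exists_pow_nat_eq c (by omega)
  have hstab : ∀ w ∈ W, Φ w ∈ W := by
    intro w hw
    refine Submodule.closure_induction (p := fun x _ => Φ x ∈ W) ?_ ?_ ?_ hw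
    · rw [hz]; exact W.zero_mem
    · intro x y _ _ hx hy; rw [hadd]; exact W.add_mem hx hy
    · intro c x hx; rw [hsmul, show Φ x = x from hx]
      exact W.smul_mem _ (Submodule.subset_span hx)
  have hsurj : ∀ w ∈ W, ∃ w' ∈ W, Φ w' = w := by
    intro w hw
    refine Submodule.closure_induction (p := fun x _ => ∃ w' ∈ W, Φ w' = x) ?_ ?_ ?_ hw
    · exact ⟨0, W.zero_mem, hz⟩
    · rintro x y _ _ ⟨x', hx', rfl⟩ ⟨y', hy', rfl⟩
      exact ⟨x' + y', W.add_mem hx' hy', hadd _ _⟩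
    · intro c x hx
      obtain ⟨d, hd⟩ := hroot c
      exact ⟨d • x, W.smul_mem _ (Submodule.subset_span hx), by rw [hsmul, hd, show Φ x = x from hx]⟩
  have has : ∀ w ∈ W, ∃ w' ∈ W, Φ w' - w' = w := by
    intro w hw
    refine Submodule.closure_induction (p := fun x _ => ∃ w' ∈ W, Φ w' - w' = x) ?_ ?_ ?_ hw
    · exact ⟨0, W.zero_mem, by simp [hz]⟩
    · rintro x y _ _ ⟨x', hx', rfl⟩ ⟨y', hy', rfl⟩
      exact ⟨x' + y', W.add_mem hx' hy', by rw [hadd]; abel⟩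
    · intro c x hx
      have : ∃ d : k, d ^ Q - d = c := by
        have : ∃ d : k, (Polynomial.X ^ Q - (Polynomial.X + Polynomial.C c)).IsRoot d := by
          apply IsAlgClosed.exists_root
          intro h4
          have h5 := Polynomial.natDegree_eq_of_degree_eq_some (n := 0) h4
          rw [Polynomial.natDegree_sub_eq_left_of_natDegree_lt] at h5
          · simp at h5; omega
          · simp; omega
        obtain ⟨d, hd⟩ := this
        refine ⟨d, ?_⟩
        simp [Polynomial.IsRoot] at hd
        linear_combination hd
      obtain ⟨d, hd⟩ := this
      refine ⟨d • x, W.smul_mem _ (Submodule.subset_span hx), ?_⟩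
      rw [hsmul, show Φ x = x from hx, ← sub_smul, hd]
  have hquot : Nontrivial (V ⧸ W) := Submodule.Quotient.nontrivial_iff.2 hne
  let Φ' : V ⧸ W → V ⧸ W := fun x => W.mkQ (Φ (Quotient.out x))
  have hΦ' : ∀ v, Φ' (W.mkQ v) = W.mkQ (Φ v) := by
    intro v
    rw [← sub_eq_zero]
    simp only [Φ']
    rw [← map_sub, ← hsub, Submodule.mkQ_apply, Submodule.Quotient.mk_eq_zero]
    apply hstab
    rw [← Submodule.Quotient.mk_eq_zero, Submodule.Quotient.mk_sub, sub_eq_zero]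
    exact Quotient.out_eq _
  have hms : Function.Surjective W.mkQ := Submodule.mkQ_surjective W
  obtain ⟨x, hx0, hx⟩ := lang_exists (k := k) Q hQ Φ'
    (by
      intro v w
      obtain ⟨v, rfl⟩ := hms v
      obtain ⟨w, rfl⟩ := hms w
      rw [← map_add, hΦ', hΦ', hΦ', hadd, map_add])
    (by
      intro c v
      obtain ⟨v, rfl⟩ := hms v
      rw [← map_smul, hΦ', hΦ', hsmul, map_smul])
    (by
      intro v hv
      obtain ⟨v, rfl⟩ := hms v
      rw [hΦ', Submodule.mkQ_apply, Submodule.Quotient.mk_eq_zero] at hv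
      rw [Submodule.mkQ_apply, Submodule.Quotient.mk_eq_zero]
      obtain ⟨w, hw, hw'⟩ := hsurj _ hv
      have := hinj (v - w) (by rw [hsub, hw', sub_self])
      rwa [sub_eq_zero.1 this])
  obtain ⟨v, rfl⟩ := hms x
  rw [hΦ', ← sub_eq_zero, ← map_sub, Submodule.mkQ_apply, Submodule.Quotient.mk_eq_zero] at hx
  obtain ⟨w, hw, hw'⟩ := has _ hx
  apply hx0
  rw [Submodule.mkQ_apply, Submodule.Quotient.mk_eq_zero]
  have : v - w ∈ W := by
    apply Submodule.subset_span
    show Φ (v - w) = v - w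
    rw [hsub, sub_eq_sub_iff_sub_eq_sub, hw']
  simpa using W.add_mem this hw


/-- A Hermitian form on a finite vector space over a field with `q ^ 2` elements. -/
structure HermData (K V : Type*) [Field K] [AddCommGroup V] [Module K V] (q : ℕ)
    (h : V → V → K) : Prop where
  hadd : ∀ x y z, h x (y + z) = h x y + h x z
  hsmul : ∀ x (c : K) y, h x (c • y) = c * h x y
  herm : ∀ x y, h y x = (h x y) ^ q
  frob : ∀ a b : K, (a + b) ^ q = a ^ q + b ^ q
  qq : ∀ a : K, a ^ (q * q) = a
  card : Nat.card K = q ^ 2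
  hq : 2 ≤ q
  norm : ∀ c : K, c ≠ 0 → c ^ q = c → Nat.card {x : K // x ^ (q + 1) = c} = q + 1
  trace : ∃ m : K, m + m ^ q ≠ 0

namespace HermData

variable {K V : Type*} [Field K] [AddCommGroup V] [Module K V] {q : ℕ} {h : V → V → K}

theorem zero_right (H : HermData K V q h) (x : V) : h x 0 = 0 := by
  have := H.hsmul x 0 0
  simpa using this

theorem q_ne (H : HermData K V q h) : q ≠ 0 := by have := H.hq; omega

theorem ladd (H : HermData K V q h) (x y z : V) : h (x + y) z = h x z + h y z := by
  rw [H.herm z (x + y), H.hadd, H.frob, ← H.herm, ← H.herm]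

theorem lsmul (H : HermData K V q h) (c : K) (x z : V) : h (c • x) z = c ^ q * h x z := by
  rw [H.herm z (c • x), H.hsmul, mul_pow, ← H.herm]

theorem rsub (H : HermData K V q h) (x y z : V) : h x (y - z) = h x y - h x z := by
  have := H.hadd x (y - z) z
  rw [sub_add_cancel] at this
  rw [this]; ring

theorem orth_symm (H : HermData K V q h) {x y : V} (hxy : h x y = 0) : h y x = 0 := by
  rw [H.herm x y, hxy, zero_pow H.q_ne]

theorem pow_sub (H : HermData K V q h) (a b : K) : (a - b) ^ q = a ^ q - b ^ q := by
  have := H.frob (a - b) b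
  rw [sub_add_cancel] at this
  rw [this]; ring

theorem norm_fix (H : HermData K V q h) (x : K) : (x ^ (q + 1)) ^ q = x ^ (q + 1) := by
  rw [← pow_mul, add_mul, one_mul, pow_add, H.qq, pow_succ, mul_comm]

/-- The orthogonal complement of `e` in `W`. -/
def perp (H : HermData K V q h) (W : Submodule K V) (e : V) : Submodule K V where
  carrier := {v | v ∈ W ∧ h e v = 0}
  add_mem' := by
    rintro a b ⟨ha, ha'⟩ ⟨hb, hb'⟩
    exact ⟨W.add_mem ha hb, by rw [H.hadd, ha', hb', add_zero]⟩
  zero_mem' := ⟨W.zero_mem, H.zero_right e⟩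
  smul_mem' := by
    rintro c a ⟨ha, ha'⟩
    exact ⟨W.smul_mem c ha, by rw [H.hsmul, ha', mul_zero]⟩

theorem mem_perp (H : HermData K V q h) (W : Submodule K V) (e v : V) :
    v ∈ H.perp W e ↔ v ∈ W ∧ h e v = 0 := Iff.rfl

/-- The form is nondegenerate on `W`. -/
def ND (h : V → V → K) (W : Submodule K V) : Prop := ∀ x ∈ W, (∀ y ∈ W, h x y = 0) → x = 0

theorem proj_mem (H : HermData K V q h) {W : Submodule K V} {e v : V} (he : e ∈ W)
    (he1 : h e e = 1) (hv : v ∈ W) : v - h e v • e ∈ H.perp W e :=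
  ⟨W.sub_mem hv (W.smul_mem _ he), by rw [H.rsub, H.hsmul, he1, mul_one, sub_self]⟩

theorem nd_perp (H : HermData K V q h) {W : Submodule K V} {e : V} (he : e ∈ W)
    (he1 : h e e = 1) (hW : ND h W) : ND h (H.perp W e) := by
  intro x hx hxy
  apply hW x hx.1
  intro y hy
  have h1 := hxy _ (H.proj_mem he he1 hy)
  rwa [H.rsub, H.hsmul, H.orth_symm hx.2, mul_zero, sub_zero] at h1

theorem self_decomp (H : HermData K V q h) {W : Submodule K V} {e w : V}
    (he1 : h e e = 1) (hw : w ∈ H.perp W e) (c : K) :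
    h (c • e + w) (c • e + w) = c ^ (q + 1) + h w w := by
  rw [H.hadd, H.ladd, H.ladd, H.hsmul, H.hsmul, H.lsmul, H.lsmul, he1, hw.2, H.orth_symm hw.2]
  ring

/-- Splitting off a unit vector. -/
def splitEquiv (H : HermData K V q h) {W : Submodule K V} {e : V} (he : e ∈ W)
    (he1 : h e e = 1) : W ≃ K × H.perp W e where
  toFun v := (h e v, ⟨v - h e v • e, H.proj_mem he he1 v.2⟩)
  invFun p := ⟨p.1 • e + p.2, W.add_mem (W.smul_mem _ he) p.2.2.1⟩
  left_inv v := by ext; simp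
  right_inv := by
    rintro ⟨c, w, hw⟩
    have : h e (c • e + w) = c := by rw [H.hadd, H.hsmul, he1, hw.2]; ring
    simp [this]

/-- The level sets of the form. -/
abbrev Lvl (h : V → V → K) (W : Submodule K V) (c : K) : Type _ := {v : V // v ∈ W ∧ h v v = c}

instance [Finite V] (W : Submodule K V) (c : K) : Finite (Lvl h W c) := by
  unfold Lvl; infer_instance

/-- Splitting level sets along a unit vector. -/
def lvlEquiv (H : HermData K V q h) {W : Submodule K V} {e : V} (he : e ∈ W)
    (he1 : h e e = 1) (c : K) : Lvl h W c ≃ Σ x : K, Lvl h (H.perp W e) (c - x ^ (q + 1)) where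
  toFun v := ⟨h e v.1, v.1 - h e v.1 • e, H.proj_mem he he1 v.2.1, by
    have h1 := H.self_decomp he1 (H.proj_mem he he1 v.2.1) (h e v.1)
    rw [add_sub_cancel, v.2.2] at h1
    exact (eq_sub_of_add_eq' h1.symm)⟩
  invFun p := ⟨p.1 • e + p.2.1, W.add_mem (W.smul_mem _ he) p.2.2.1.1, by
    rw [H.self_decomp he1 p.2.2.1, p.2.2.2]; ring⟩
  left_inv v := by apply Subtype.ext; simp
  right_inv := by
    rintro ⟨c, w, hw, hw'⟩
    have : h e (c • e + w) = c := by rw [H.hadd, H.hsmul, he1, hw.2]; ring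
    refine Sigma.ext this ?_
    simp only
    congr 1
    · rw [this]
    · simp [this]
    · exact proof_irrel_heq _ _

theorem exists_unit (H : HermData K V q h) {W : Submodule K V} (hW : ND h W) (hne : W ≠ ⊥) :
    ∃ e ∈ W, h e e = 1 := by
  have h1 : ∃ v ∈ W, h v v ≠ 0 := by
    by_contra! hcon
    obtain ⟨x, hx, hx0⟩ := Submodule.exists_mem_ne_zero_of_ne_bot hne
    apply hx0
    apply hW x hx
    intro y hy
    by_contra hxy
    obtain ⟨m, hm⟩ := H.trace
    apply hm
    have h2 := hcon _ (W.add_mem hx (W.smul_mem (m * (h x y)⁻¹) hy))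
    rw [H.ladd, H.hadd, H.hadd, hcon x hx, H.hsmul, H.herm x, H.hsmul, H.hsmul, H.lsmul,
      hcon y hy, inv_mul_cancel_right₀ hxy] at h2
    simpa using h2
  obtain ⟨v, hv, hv0⟩ := h1
  have hfix : (h v v) ^ q = h v v := (H.herm v v).symm
  have h2 := H.norm (h v v)⁻¹ (inv_ne_zero hv0) (by rw [inv_pow, hfix])
  have h3 : Nonempty {x : K // x ^ (q + 1) = (h v v)⁻¹} := by
    by_contra hn
    rw [not_nonempty_iff] at hn
    rw [Nat.card_of_isEmpty] at h2
    omega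
  obtain ⟨x, hx⟩ := h3
  refine ⟨x • v, W.smul_mem _ hv, ?_⟩
  rw [H.hsmul, H.lsmul, ← mul_assoc, mul_comm x, ← pow_succ, hx, inv_mul_cancel₀ hv0]

/-- Counts of level sets: nonzero value and zero value. -/
def uz (q : ℕ) : ℕ → ℕ × ℕ
  | 0 => (0, 1)
  | n + 1 => ((q + 1) * (uz q n).2 + (q ^ 2 - (q + 1)) * (uz q n).1,
      (uz q n).2 + (q ^ 2 - 1) * (uz q n).1)

theorem card_lvl [Finite K] [Finite V] (H : HermData K V q h) (n : ℕ) :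
    ∀ W : Submodule K V, ND h W → Nat.card W = (q ^ 2) ^ n →
      (∀ c : K, c ≠ 0 → c ^ q = c → Nat.card (Lvl h W c) = (uz q n).1) ∧
      Nat.card (Lvl h W 0) = (uz q n).2 := by
  classical
  have := Fintype.ofFinite K
  have hq := H.hq
  induction n with
  | zero =>
    intro W hW hc
    rw [pow_zero] at hc
    have hbot : W = ⊥ := by
      rw [Submodule.eq_bot_iff]
      intro x hx
      have := (Nat.card_eq_one_iff_unique.1 hc).1
      exact congrArg Subtype.val (Subsingleton.elim (⟨x, hx⟩ : W) 0)
    subst hbot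
    constructor
    · intro c hc0 _
      have : IsEmpty (Lvl h (⊥ : Submodule K V) c) := by
        refine ⟨?_⟩
        rintro ⟨v, hv, hv'⟩
        rw [Submodule.mem_bot] at hv
        subst hv
        rw [H.zero_right] at hv'
        exact hc0 hv'.symm
      simp [uz]
    · simp only [uz]
      rw [Nat.card_eq_one_iff_unique]
      refine ⟨⟨?_⟩, ⟨⟨0, Submodule.zero_mem _, H.zero_right 0⟩⟩⟩
      rintro ⟨v, hv, hv'⟩ ⟨w, hw, hw'⟩
      rw [Submodule.mem_bot] at hv hw
      subst hv; subst hw; rfl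
  | succ n ih =>
    intro W hW hc
    have hne : W ≠ ⊥ := by
      rintro rfl
      have h1 : Nat.card (⊥ : Submodule K V) = 1 := by simp
      rw [h1] at hc
      have h2 : 1 < (q ^ 2) ^ (n + 1) := Nat.one_lt_pow (by omega) (by nlinarith)
      omega
    obtain ⟨e, he, he1⟩ := H.exists_unit hW hne
    have hcard : Nat.card (H.perp W e) = (q ^ 2) ^ n := by
      have h1 := Nat.card_congr (H.splitEquiv he he1)
      rw [Nat.card_prod, hc, H.card, pow_succ, mul_comm] at h1
      exact (Nat.eq_of_mul_eq_mul_left (by positivity) h1).symm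
    obtain ⟨ih1, ih2⟩ := ih _ (H.nd_perp he he1 hW) hcard
    have key : ∀ c : K, c ^ q = c → ∀ N, Nat.card {x : K // x ^ (q + 1) = c} = N →
        Nat.card (Lvl h W c) = N * (uz q n).2 + (q ^ 2 - N) * (uz q n).1 := by
      intro c hcq N hN
      rw [Nat.card_congr (H.lvlEquiv he he1 c), Nat.card_sigma]
      have h1 : ∀ x : K, Nat.card (Lvl h (H.perp W e) (c - x ^ (q + 1))) =
          if x ^ (q + 1) = c then (uz q n).2 else (uz q n).1 := by
        intro x
        split_ifs with hx
        · rw [hx, sub_self, ih2]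
        · apply ih1
          · rw [sub_ne_zero]; exact fun h => hx h.symm
          · rw [H.pow_sub, hcq, H.norm_fix]
      rw [Finset.sum_congr rfl fun x _ => h1 x, Finset.sum_ite, Finset.sum_const, Finset.sum_const,
        smul_eq_mul, smul_eq_mul]
      have h2 : (Finset.univ.filter fun x : K => x ^ (q + 1) = c).card = N := by
        rw [← hN, Nat.card_eq_fintype_card, Fintype.card_subtype]
      have h3 : (Finset.univ.filter fun x : K => ¬ x ^ (q + 1) = c).card = q ^ 2 - N := by
        have h4 := Finset.card_filter_add_card_filter_not (s := (Finset.univ : Finset K))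
          (fun x : K => x ^ (q + 1) = c)
        rw [h2, Finset.card_univ, ← Nat.card_eq_fintype_card, H.card] at h4
        omega
      rw [h2, h3]
    constructor
    · intro c hc0 hcq
      exact key c hcq _ (H.norm c hc0 hcq)
    · rw [key 0 (zero_pow H.q_ne) 1]
      · simp [uz]
      · rw [Nat.card_eq_one_iff_unique]
        refine ⟨⟨?_⟩, ⟨⟨0, by simp⟩⟩⟩
        rintro ⟨x, hx⟩ ⟨y, hy⟩
        apply Subtype.ext
        rw [pow_eq_zero_iff (by omega)] at hx hy
        simp [hx, hy]

/-- Orthonormal frames. -/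
def IsFrame (h : V → V → K) (W : Submodule K V) (n : ℕ) (x : Fin n → V) : Prop :=
  (∀ i, x i ∈ W) ∧ ∀ i j, h (x i) (x j) = if i = j then 1 else 0

theorem card_frames [Finite K] [Finite V] (H : HermData K V q h) (n : ℕ) :
    ∀ W : Submodule K V, ND h W → Nat.card W = (q ^ 2) ^ n →
      ∏ i ∈ Finset.range n, (uz q (i + 1)).1 ≤ Nat.card {x : Fin n → V // IsFrame h W n x} := by
  classical
  induction n with
  | zero =>
    intro W hW hc
    have : Nonempty {x : Fin 0 → V // IsFrame h W 0 x} :=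
      ⟨⟨fun i => i.elim0, fun i => i.elim0, fun i => i.elim0⟩⟩
    rw [Finset.prod_range_zero]
    exact Nat.card_pos (α := {x : Fin 0 → V // IsFrame h W 0 x})
  | succ n ih =>
    intro W hW hc
    have := Fintype.ofFinite (Lvl h W 1)
    let g : (Σ e : Lvl h W 1, {x : Fin n → V // IsFrame h (H.perp W e.1) n x}) →
        {x : Fin (n + 1) → V // IsFrame h W (n + 1) x} := fun p =>
      ⟨Fin.cons p.1.1 p.2.1, by
        obtain ⟨⟨e, he, he1⟩, x, hx, hx'⟩ := p
        constructor
        · intro i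
          refine Fin.cases ?_ (fun i => ?_) i
          · exact he
          · exact (hx i).1
        · intro i j
          refine Fin.cases ?_ (fun i => ?_) i <;> refine Fin.cases ?_ (fun j => ?_) j
          · simpa using he1
          · simpa [(Fin.succ_ne_zero j).symm] using (hx j).2
          · simpa using H.orth_symm (hx i).2
          · simpa using hx' i j⟩
    have hg : Function.Injective g := by
      rintro ⟨⟨e, he⟩, x, hx⟩ ⟨⟨e', he'⟩, x', hx'⟩ hh
      have h1 : (Fin.cons e x : Fin (n + 1) → V) = Fin.cons e' x' := congrArg Subtype.val hh
      have h2 := (Fin.cons_injective2 h1).1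
      have h3 := (Fin.cons_injective2 h1).2
      subst h2; subst h3; rfl
    refine le_trans ?_ (Nat.card_le_card_of_injective g hg)
    rw [Nat.card_sigma, Finset.prod_range_succ]
    have hb : ∀ e : Lvl h W 1, ∏ i ∈ Finset.range n, (uz q (i + 1)).1 ≤
        Nat.card {x : Fin n → V // IsFrame h (H.perp W e.1) n x} := by
      rintro ⟨e, he, he1⟩
      apply ih _ (H.nd_perp he he1 hW)
      have h1 := Nat.card_congr (H.splitEquiv he he1)
      have hq := H.hq
      rw [Nat.card_prod, hc, H.card, pow_succ, mul_comm] at h1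
      exact (Nat.eq_of_mul_eq_mul_left (by positivity) h1).symm
    refine le_trans ?_ (Finset.sum_le_sum fun e _ => hb e)
    rw [Finset.sum_const, smul_eq_mul, Finset.card_univ, ← Nat.card_eq_fintype_card,
      (H.card_lvl (n + 1) W hW hc).1 1 one_ne_zero (one_pow q), mul_comm]

theorem prod_uz (r : ℕ) (hr : 1 ≤ r) : (∏ i ∈ Finset.range 4, (uz (r + 1) (i + 1)).1) =
    (r + 1) ^ 6 * (r + 2) * (r * (r + 2)) * ((r + 1) ^ 3 + 1) * (r * (r + 2) * ((r + 1) ^ 2 + 1)) := by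
  have hs : ∀ r, (r + 1) ^ 2 - 1 = r * (r + 2) := by
    intro r; rw [show (r + 1) ^ 2 = r * (r + 2) + 1 by ring]; omega
  rcases r with _ | r
  · omega
  · have h1 : (r + 1 + 1) ^ 2 - (r + 1 + 1 + 1) = r ^ 2 + 3 * r + 1 := by
      rw [show (r + 1 + 1) ^ 2 = r ^ 2 + 3 * r + 1 + (r + 1 + 1 + 1) by ring]; omega
    simp only [Finset.prod_range_succ, Finset.prod_range_zero, uz, hs, h1]
    ring

end HermData


section Lines

variable {k : Type*} [Field k]

/-- The line `y₁ = s y₀, s y₃ = c y₂`. -/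
def Ln (y : (Fin 4 → k) ≃ₗ[k] (Fin 4 → k)) (c s : k) : Submodule k (Fin 4 → k) where
  carrier := {v | y v 1 = s * y v 0 ∧ s * y v 3 = c * y v 2}
  add_mem' := by
    rintro a b ⟨h1, h2⟩ ⟨h3, h4⟩
    refine ⟨?_, ?_⟩
    · simp only [map_add, Pi.add_apply]; linear_combination h1 + h3
    · simp only [map_add, Pi.add_apply]; linear_combination h2 + h4
  zero_mem' := by simp
  smul_mem' := by
    rintro r a ⟨h1, h2⟩
    refine ⟨?_, ?_⟩
    · simp only [map_smul, Pi.smul_apply, smul_eq_mul]; linear_combination r * h1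
    · simp only [map_smul, Pi.smul_apply, smul_eq_mul]; linear_combination r * h2

theorem mem_Ln (y : (Fin 4 → k) ≃ₗ[k] (Fin 4 → k)) (c s : k) (v : Fin 4 → k) :
    v ∈ Ln y c s ↔ y v 1 = s * y v 0 ∧ s * y v 3 = c * y v 2 := Iff.rfl

/-- Swap the coordinates 1 and 3. -/
def sw (y : (Fin 4 → k) ≃ₗ[k] (Fin 4 → k)) : (Fin 4 → k) ≃ₗ[k] (Fin 4 → k) :=
  y.trans (LinearEquiv.funCongrLeft k k (Equiv.swap 1 3))

theorem sw0 (y : (Fin 4 → k) ≃ₗ[k] (Fin 4 → k)) (v) : sw y v 0 = y v 0 := rfl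
theorem sw1 (y : (Fin 4 → k) ≃ₗ[k] (Fin 4 → k)) (v) : sw y v 1 = y v 3 := rfl
theorem sw2 (y : (Fin 4 → k) ≃ₗ[k] (Fin 4 → k)) (v) : sw y v 2 = y v 2 := rfl
theorem sw3 (y : (Fin 4 → k) ≃ₗ[k] (Fin 4 → k)) (v) : sw y v 3 = y v 1 := rfl

theorem sw_sw (y : (Fin 4 → k) ≃ₗ[k] (Fin 4 → k)) : sw (sw y) = y := by
  ext v i
  fin_cases i <;> rfl

theorem eq_zero_of_coords (y : (Fin 4 → k) ≃ₗ[k] (Fin 4 → k)) {v : Fin 4 → k}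
    (h0 : y v 0 = 0) (h1 : y v 1 = 0) (h2 : y v 2 = 0) (h3 : y v 3 = 0) : v = 0 := by
  have : y v = 0 := by
    ext i
    fin_cases i
    · exact h0
    · exact h1
    · exact h2
    · exact h3
  simpa using this

theorem isLine_Ln (y : (Fin 4 → k) ≃ₗ[k] (Fin 4 → k)) (c : k) {s : k} (hs : s ≠ 0) :
    IsLine (Ln y c s) := by
  let f : (k × k) →ₗ[k] (Fin 4 → k) := y.symm.toLinearMap ∘ₗ
    { toFun := fun p => ![p.1, s * p.1, p.2, s⁻¹ * c * p.2]
      map_add' := by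
        intro p r
        ext i
        fin_cases i <;> simp <;> ring
      map_smul' := by
        intro p r
        ext i
        fin_cases i <;> simp <;> ring }
  have hf : ∀ p, y (f p) = ![p.1, s * p.1, p.2, s⁻¹ * c * p.2] := fun p => by simp [f]
  have hinj : Function.Injective f := by
    rw [injective_iff_map_eq_zero]
    intro p hp
    have h1 := hf p
    rw [hp, map_zero] at h1
    have h2 := congrFun h1 0
    have h3 := congrFun h1 2
    simp at h2 h3
    exact Prod.ext h2.symm h3.symm
  have hr : LinearMap.range f = Ln y c s := by
    ext v
    rw [mem_Ln]
    constructor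
    · rintro ⟨p, rfl⟩
      rw [hf]
      simp
      field_simp
    · rintro ⟨h1, h2⟩
      refine ⟨(y v 0, y v 2), ?_⟩
      apply y.injective
      rw [hf]
      ext i
      fin_cases i
      · rfl
      · simp [h1]
      · rfl
      · simp; field_simp; linear_combination -h2
  unfold IsLine
  rw [← hr, LinearMap.finrank_range_of_inj hinj]
  simp

theorem skew_same (y : (Fin 4 → k) ≃ₗ[k] (Fin 4 → k)) {c c' s s' : k}
    (hs : s ≠ 0) (hss : s ≠ s') (hc : c * s' ≠ c' * s) : SkewLine (Ln y c s) (Ln y c' s') := by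
  unfold SkewLine
  rw [Submodule.eq_bot_iff]
  rintro v ⟨⟨h1, h2⟩, h3, h4⟩
  have h0 : y v 0 = 0 := by
    have : (s - s') * y v 0 = 0 := by linear_combination h3 - h1
    exact (mul_eq_zero.1 this).resolve_left (sub_ne_zero.2 hss)
  have h20 : y v 2 = 0 := by
    have : (c * s' - c' * s) * y v 2 = 0 := by linear_combination s * h4 - s' * h2
    exact (mul_eq_zero.1 this).resolve_left (sub_ne_zero.2 hc)
  apply eq_zero_of_coords y h0 (by rw [h1, h0, mul_zero]) h20
  rw [h20, mul_zero] at h2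
  exact (mul_eq_zero.1 h2).resolve_left hs

theorem meets_of (L M : Submodule k (Fin 4 → k)) (v : Fin 4 → k) (hv : v ≠ 0) (h1 : v ∈ L)
    (h2 : v ∈ M) : MeetsLine L M := by
  intro h
  apply hv
  have : v ∈ L ⊓ M := ⟨h1, h2⟩
  rwa [h, Submodule.mem_bot] at this

theorem meets_same1 (y : (Fin 4 → k) ≃ₗ[k] (Fin 4 → k)) (c c' s : k) :
    MeetsLine (Ln y c s) (Ln y c' s) := by
  refine meets_of _ _ (y.symm ![1, s, 0, 0]) ?_ ?_ ?_
  · intro h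
    have := congrFun ((LinearEquiv.map_eq_zero_iff _).1 h) 0
    simp at this
  · rw [mem_Ln]; simp
  · rw [mem_Ln]; simp

theorem meets_same2 (y : (Fin 4 → k) ≃ₗ[k] (Fin 4 → k)) {c c' s s' : k} (hs : s ≠ 0)
    (h : c * s' = c' * s) : MeetsLine (Ln y c s) (Ln y c' s') := by
  refine meets_of _ _ (y.symm ![0, 0, s, c]) ?_ ?_ ?_
  · intro h
    have := congrFun ((LinearEquiv.map_eq_zero_iff _).1 h) 2
    simp at this
    exact hs this
  · rw [mem_Ln]; simp [mul_comm]
  · rw [mem_Ln]; simp; linear_combination h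

theorem meets_sw (y : (Fin 4 → k) ≃ₗ[k] (Fin 4 → k)) {c s s' : k} (hc : c ≠ 0) :
    MeetsLine (Ln y c s) (Ln (sw y) c s') := by
  refine meets_of _ _ (y.symm ![c, s * c, s * s', s' * c]) ?_ ?_ ?_
  · intro h
    have := congrFun ((LinearEquiv.map_eq_zero_iff _).1 h) 0
    simp at this
    exact hc this
  · rw [mem_Ln]; simp; ring
  · rw [mem_Ln, sw0, sw1, sw2, sw3]; simp; ring

theorem skew_sw (y : (Fin 4 → k) ≃ₗ[k] (Fin 4 → k)) {c c' s s' : k} (hc : c ≠ c') (hs : s ≠ 0)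
    (hs' : s' ≠ 0) : SkewLine (Ln y c s) (Ln (sw y) c' s') := by
  unfold SkewLine
  rw [Submodule.eq_bot_iff]
  rintro v ⟨⟨h1, h2⟩, h3, h4⟩
  rw [sw0, sw1] at h3
  rw [sw2, sw3] at h4
  have h20 : y v 2 = 0 := by
    have : (c - c') * y v 2 = 0 := by linear_combination h4 - h2 + s * h3 - s' * h1
    exact (mul_eq_zero.1 this).resolve_left (sub_ne_zero.2 hc)
  rw [h20, mul_zero] at h2 h4
  have h30 := (mul_eq_zero.1 h2).resolve_left hs
  have h10 := (mul_eq_zero.1 h4).resolve_left hs'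
  have h0 : y v 0 = 0 := by
    rw [h10] at h1
    exact (mul_eq_zero.1 h1.symm).resolve_left hs
  exact eq_zero_of_coords y h0 h10 h20 h30

theorem ne_of_skew {L M : Submodule k (Fin 4 → k)} (hL : IsLine L) (h : SkewLine L M) :
    L ≠ M := by
  rintro rfl
  unfold SkewLine at h
  rw [inf_idem] at h
  unfold IsLine at hL
  rw [h] at hL
  simp at hL

/-- A ruling. -/
def Rl (y : (Fin 4 → k) ≃ₗ[k] (Fin 4 → k)) (S : Set k) (c : k) :
    Set (Submodule k (Fin 4 → k)) := Set.image (Ln y c) S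

/-- Hypotheses on the index set of the rulings. -/
structure GoodS (S : Set k) (q : ℕ) (c c' : k) : Prop where
  card : S.ncard = q + 1
  fin : S.Finite
  ne : ∀ s ∈ S, s ≠ 0
  c0 : c ≠ 0
  c0' : c' ≠ 0
  cc : c ≠ c'
  mul : ∀ s ∈ S, c' * s / c ∈ S
  mul' : ∀ s ∈ S, c * s / c' ∈ S

theorem GoodS.symm {S : Set k} {q : ℕ} {c c' : k} (h : GoodS S q c c') : GoodS S q c' c :=
  ⟨h.card, h.fin, h.ne, h.c0', h.c0, h.cc.symm, h.mul', h.mul⟩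

theorem skew_ruling (y : (Fin 4 → k) ≃ₗ[k] (Fin 4 → k)) {c s s' : k}
    (hc : c ≠ 0) (hs : s ≠ 0) (hss : s ≠ s') : SkewLine (Ln y c s) (Ln y c s') :=
  skew_same y hs hss fun h => hss (mul_left_cancel₀ hc h).symm

theorem ncard_Rl (y : (Fin 4 → k) ≃ₗ[k] (Fin 4 → k)) {S : Set k} {q : ℕ} {c c' : k}
    (h : GoodS S q c c') : (Rl y S c).ncard = q + 1 := by
  rw [Rl, Set.InjOn.ncard_image, h.card]
  intro s hs s' hs' he
  by_contra hss
  exact ne_of_skew (isLine_Ln y c (h.ne s hs)) (skew_ruling y h.c0 (h.ne s hs) hss) he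

theorem disj_Rl (y : (Fin 4 → k) ≃ₗ[k] (Fin 4 → k)) {S : Set k} {q : ℕ} {c c' : k}
    (h : GoodS S q c c') : Disjoint (Rl y S c) (Rl (sw y) S c') := by
  rw [Set.disjoint_left]
  rintro _ ⟨s, hs, rfl⟩ ⟨s', hs', he⟩
  exact ne_of_skew (isLine_Ln y c (h.ne s hs)) (skew_sw y h.cc (h.ne s hs) (h.ne s' hs')) he.symm

theorem meet_count (y : (Fin 4 → k) ≃ₗ[k] (Fin 4 → k)) {S : Set k} {q : ℕ} {c c' s : k}
    (h : GoodS S q c c') (hs : s ∈ S) :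
    {M ∈ Rl (sw y) S c ∪ Rl y S c' | MeetsLine (Ln y c s) M}.ncard = q + 1 + 2 := by
  have hs0 := h.ne s hs
  have hset : {M ∈ Rl (sw y) S c ∪ Rl y S c' | MeetsLine (Ln y c s) M} =
      Rl (sw y) S c ∪ {Ln y c' s, Ln y c' (c' * s / c)} := by
    ext M
    constructor
    · rintro ⟨hM | ⟨s', hs', rfl⟩, hm⟩
      · exact Or.inl hM
      · right
        by_contra hcon
        simp only [Set.mem_insert_iff, Set.mem_singleton_iff, not_or] at hcon
        apply hm
        apply skew_same y hs0
        · rintro rfl; exact hcon.1 rfl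
        · intro he
          apply hcon.2
          rw [eq_div_of_mul_eq h.c0 ((mul_comm s' c).trans he)]
    · rintro (hM | hM)
      · refine ⟨Or.inl hM, ?_⟩
        obtain ⟨s', hs', rfl⟩ := hM
        exact meets_sw y h.c0
      · rcases hM with rfl | hM
        · exact ⟨Or.inr ⟨s, hs, rfl⟩, meets_same1 y c c' s⟩
        · rw [Set.mem_singleton_iff] at hM
          subst hM
          refine ⟨Or.inr ⟨_, h.mul s hs, rfl⟩, meets_same2 y hs0 ?_⟩
          rw [mul_div_cancel₀ _ h.c0]
  have hne : s ≠ c' * s / c := by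
    intro he
    rw [eq_div_iff h.c0, mul_comm s c] at he
    exact h.cc (mul_right_cancel₀ hs0 he)
  have hne' := ne_of_skew (isLine_Ln y c' hs0) (skew_ruling y h.c0' hs0 hne)
  have hd : Disjoint (Rl (sw y) S c) {Ln y c' s, Ln y c' (c' * s / c)} := by
    refine Set.disjoint_of_subset_right ?_ (?_ : Disjoint (Rl (sw y) S c) (Rl y S c'))
    · rintro M (rfl | hM)
      · exact ⟨s, hs, rfl⟩
      · rw [Set.mem_singleton_iff] at hM
        subst hM
        exact ⟨_, h.mul s hs, rfl⟩
    · exact (disj_Rl y h.symm).symm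
  rw [hset, Set.ncard_union_eq hd (h.fin.image _) (Set.toFinite _), ncard_Rl (sw y) h,
    Set.ncard_pair hne']

theorem meets_symm {L M : Submodule k (Fin 4 → k)} : MeetsLine L M ↔ MeetsLine M L := by
  unfold MeetsLine; rw [inf_comm]

theorem half_double (y : (Fin 4 → k) ≃ₗ[k] (Fin 4 → k)) {S : Set k} {q : ℕ} {c c' : k}
    (h : GoodS S q c c') :
    (Rl y S c ∪ Rl (sw y) S c').ncard = 2 * (q + 1) ∧
    (∀ L ∈ Rl y S c ∪ Rl (sw y) S c', IsLine L) ∧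
    (∀ L ∈ Rl y S c ∪ Rl (sw y) S c', ∀ M ∈ Rl y S c ∪ Rl (sw y) S c', L ≠ M → SkewLine L M) ∧
    (∀ L ∈ Rl y S c ∪ Rl (sw y) S c',
      {M ∈ Rl (sw y) S c ∪ Rl y S c' | MeetsLine L M}.ncard = q + 1 + 2) := by
  refine ⟨?_, ?_, ?_, ?_⟩
  · rw [Set.ncard_union_eq (disj_Rl y h) (h.fin.image _) (h.fin.image _), ncard_Rl y h,
      ncard_Rl (sw y) h.symm]; ring
  · rintro L (⟨s, hs, rfl⟩ | ⟨s, hs, rfl⟩)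
    · exact isLine_Ln _ _ (h.ne s hs)
    · exact isLine_Ln _ _ (h.ne s hs)
  · rintro L (⟨s, hs, rfl⟩ | ⟨s, hs, rfl⟩) M (⟨t, ht, rfl⟩ | ⟨t, ht, rfl⟩) hLM
    · exact skew_ruling y h.c0 (h.ne s hs) (fun he => hLM (by rw [he]))
    · exact skew_sw y h.cc (h.ne s hs) (h.ne t ht)
    · unfold SkewLine
      rw [inf_comm]
      exact skew_sw y h.cc (h.ne t ht) (h.ne s hs)
    · exact skew_ruling _ h.c0' (h.ne s hs) (fun he => hLM (by rw [he]))
  · rintro L (⟨s, hs, rfl⟩ | ⟨s, hs, rfl⟩)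
    · exact meet_count y h hs
    · have := meet_count (sw y) h.symm hs
      rwa [sw_sw, Set.union_comm] at this

theorem isDouble (y : (Fin 4 → k) ≃ₗ[k] (Fin 4 → k)) {S : Set k} {q : ℕ} {c c' : k}
    (h : GoodS S q c c') :
    IsDoubleTwoD (q + 1) (Rl y S c ∪ Rl (sw y) S c') (Rl (sw y) S c ∪ Rl y S c') := by
  obtain ⟨a1, a2, a3, a4⟩ := half_double y h
  obtain ⟨b1, b2, b3, b4⟩ := half_double (sw y) h
  rw [sw_sw] at b1 b2 b3 b4
  refine ⟨a1, b1, a2, b2, a3, b3, a4, ?_⟩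
  intro M hM
  rw [← b4 M hM]
  congr 1
  ext L
  simp only [Set.mem_ofPred_eq]
  rw [meets_symm]

/-- The quadric attached to a ruling. -/
def Gq (y : (Fin 4 → k) ≃ₗ[k] (Fin 4 → k)) (c : k) (v : Fin 4 → k) : k :=
  y v 1 * y v 3 - c * (y v 0 * y v 2)

theorem Gq_sw (y : (Fin 4 → k) ≃ₗ[k] (Fin 4 → k)) (c : k) (v : Fin 4 → k) :
    Gq (sw y) c v = Gq y c v := by
  unfold Gq; rw [sw0, sw1, sw2, sw3]; ring

theorem Gq_Ln (y : (Fin 4 → k) ≃ₗ[k] (Fin 4 → k)) {c s : k} {v : Fin 4 → k}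
    (hv : v ∈ Ln y c s) : Gq y c v = 0 := by
  obtain ⟨h1, h2⟩ := hv
  unfold Gq
  linear_combination y v 3 * h1 + y v 0 * h2

end Lines

section Fibre

variable {k : Type*} [Field k]

theorem quad_vanish {a b c s₁ s₂ s₃ : k} (h12 : s₁ ≠ s₂) (h13 : s₁ ≠ s₃) (h23 : s₂ ≠ s₃)
    (h1 : a + b * s₁ + c * s₁ ^ 2 = 0) (h2 : a + b * s₂ + c * s₂ ^ 2 = 0)
    (h3 : a + b * s₃ + c * s₃ ^ 2 = 0) : a = 0 ∧ b = 0 ∧ c = 0 := by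
  have e1 : b + c * (s₁ + s₂) = 0 := by
    have : (s₁ - s₂) * (b + c * (s₁ + s₂)) = 0 := by linear_combination h1 - h2
    exact (mul_eq_zero.1 this).resolve_left (sub_ne_zero.2 h12)
  have e2 : b + c * (s₁ + s₃) = 0 := by
    have : (s₁ - s₃) * (b + c * (s₁ + s₃)) = 0 := by linear_combination h1 - h3
    exact (mul_eq_zero.1 this).resolve_left (sub_ne_zero.2 h13)
  have e3 : c = 0 := by
    have : (s₂ - s₃) * c = 0 := by linear_combination e1 - e2
    exact (mul_eq_zero.1 this).resolve_left (sub_ne_zero.2 h23)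
  subst e3
  have e4 : b = 0 := by simpa using e1
  subst e4
  exact ⟨by simpa using h1, rfl, rfl⟩

theorem coord_expand (y z : (Fin 4 → k) ≃ₗ[k] (Fin 4 → k)) (v : Fin 4 → k) (i : Fin 4) :
    z v i = z (y.symm (Pi.single 0 1)) i * y v 0 + z (y.symm (Pi.single 1 1)) i * y v 1
      + z (y.symm (Pi.single 2 1)) i * y v 2 + z (y.symm (Pi.single 3 1)) i * y v 3 := by
  have h : v = ∑ j, y v j • y.symm (Pi.single j 1) := by
    apply y.injective
    rw [map_sum]
    simp only [map_smul, LinearEquiv.apply_symm_apply]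
    ext i
    simp [Finset.sum_apply, Pi.single_apply]
  conv_lhs => rw [h]
  simp [Fin.sum_univ_four]
  ring

theorem quadric_of_three (y z : (Fin 4 → k) ≃ₗ[k] (Fin 4 → k)) {c d s₁ s₂ s₃ : k} (hc : c ≠ 0)
    (h12 : s₁ ≠ s₂) (h13 : s₁ ≠ s₃) (h23 : s₂ ≠ s₃)
    (h : ∀ s, s = s₁ ∨ s = s₂ ∨ s = s₃ → ∀ v ∈ Ln y c s, Gq z d v = 0) :
    ∃ l : k, ∀ v, Gq z d v = l * Gq y c v := by
  set a := fun i j => z (y.symm (Pi.single j 1)) i with ha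
  have hz : ∀ v i, z v i = a i 0 * y v 0 + a i 1 * y v 1 + a i 2 * y v 2 + a i 3 * y v 3 :=
    fun v i => coord_expand y z v i
  clear_value a
  have key : ∀ s, s = s₁ ∨ s = s₂ ∨ s = s₃ → ∀ α β : k,
      (a 1 0 * α + a 1 1 * (s * α) + a 1 2 * (s * β) + a 1 3 * (c * β)) *
      (a 3 0 * α + a 3 1 * (s * α) + a 3 2 * (s * β) + a 3 3 * (c * β)) -
      d * ((a 0 0 * α + a 0 1 * (s * α) + a 0 2 * (s * β) + a 0 3 * (c * β)) *
      (a 2 0 * α + a 2 1 * (s * α) + a 2 2 * (s * β) + a 2 3 * (c * β))) = 0 := by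
    intro s hs α β
    have := h s hs (y.symm ![α, s * α, s * β, c * β]) (by rw [mem_Ln]; simp; ring)
    unfold Gq at this
    simp only [hz, LinearEquiv.apply_symm_apply] at this
    simpa using this
  have k1 : ∀ s, s = s₁ ∨ s = s₂ ∨ s = s₃ → (a 1 0 * a 3 0 - d * (a 0 0 * a 2 0)) +
      (a 1 0 * a 3 1 + a 1 1 * a 3 0 - d * (a 0 0 * a 2 1 + a 0 1 * a 2 0)) * s +
      (a 1 1 * a 3 1 - d * (a 0 1 * a 2 1)) * s ^ 2 = 0 := by
    intro s hs
    linear_combination key s hs 1 0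
  have k2 : ∀ s, s = s₁ ∨ s = s₂ ∨ s = s₃ → c ^ 2 * (a 1 3 * a 3 3 - d * (a 0 3 * a 2 3)) +
      c * (a 1 2 * a 3 3 + a 1 3 * a 3 2 - d * (a 0 2 * a 2 3 + a 0 3 * a 2 2)) * s +
      (a 1 2 * a 3 2 - d * (a 0 2 * a 2 2)) * s ^ 2 = 0 := by
    intro s hs
    linear_combination key s hs 0 1
  have k3 : ∀ s, s = s₁ ∨ s = s₂ ∨ s = s₃ →
      c * (a 1 0 * a 3 3 + a 1 3 * a 3 0 - d * (a 0 0 * a 2 3 + a 0 3 * a 2 0)) +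
      ((a 1 0 * a 3 2 + a 1 2 * a 3 0 - d * (a 0 0 * a 2 2 + a 0 2 * a 2 0)) +
        c * (a 1 1 * a 3 3 + a 1 3 * a 3 1 - d * (a 0 1 * a 2 3 + a 0 3 * a 2 1))) * s +
      (a 1 1 * a 3 2 + a 1 2 * a 3 1 - d * (a 0 1 * a 2 2 + a 0 2 * a 2 1)) * s ^ 2 = 0 := by
    intro s hs
    linear_combination key s hs 1 1 - k1 s hs - k2 s hs
  obtain ⟨p1, p2, p3⟩ := quad_vanish h12 h13 h23 (k1 s₁ (by simp)) (k1 s₂ (by simp))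
    (k1 s₃ (by simp))
  obtain ⟨q1, q2, q3⟩ := quad_vanish h12 h13 h23 (k2 s₁ (by simp)) (k2 s₂ (by simp))
    (k2 s₃ (by simp))
  obtain ⟨r1, r2, r3⟩ := quad_vanish h12 h13 h23 (k3 s₁ (by simp)) (k3 s₂ (by simp))
    (k3 s₃ (by simp))
  replace q1 := (mul_eq_zero.1 q1).resolve_left (pow_ne_zero 2 hc)
  replace q2 := (mul_eq_zero.1 q2).resolve_left hc
  replace r1 := (mul_eq_zero.1 r1).resolve_left hc
  refine ⟨a 1 1 * a 3 3 + a 1 3 * a 3 1 - d * (a 0 1 * a 2 3 + a 0 3 * a 2 1), fun v => ?_⟩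
  unfold Gq
  simp only [hz]
  generalize y v 0 = w0
  generalize y v 1 = w1
  generalize y v 2 = w2
  generalize y v 3 = w3
  linear_combination p1 * w0 ^ 2 + p2 * w0 * w1 + p3 * w1 ^ 2 + q1 * w3 ^ 2 + q2 * w2 * w3 +
    q3 * w2 ^ 2 + r1 * w0 * w3 + r2 * w0 * w2 + r3 * w1 * w2

theorem quadric_of_ruling (y z : (Fin 4 → k) ≃ₗ[k] (Fin 4 → k)) {S : Set k} {q : ℕ}
    {c c' d d' : k} (hq : 5 ≤ q + 1) (h : GoodS S q c c')
    (hsub : Rl y S c ⊆ Rl z S d ∪ Rl (sw z) S d') :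
    ∃ d₁, (d₁ = d ∨ d₁ = d') ∧ ∃ l : k, ∀ v, Gq z d₁ v = l * Gq y c v := by
  let T : k → Set k := fun d₁ => {s | s ∈ S ∧ ∀ v ∈ Ln y c s, Gq z d₁ v = 0}
  have hTf : ∀ d₁, (T d₁).Finite := fun d₁ => h.fin.subset fun s hs => hs.1
  have hS : S ⊆ T d ∪ T d' := by
    intro s hs
    rcases hsub ⟨s, hs, rfl⟩ with ⟨t, ht, he⟩ | ⟨t, ht, he⟩
    · left
      exact ⟨hs, fun v hv => Gq_Ln z (by rw [he]; exact hv)⟩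
    · right
      refine ⟨hs, fun v hv => ?_⟩
      rw [← Gq_sw]
      exact Gq_Ln (sw z) (by rw [he]; exact hv)
  have hcard : q + 1 ≤ (T d).ncard + (T d').ncard := by
    rw [← h.card]
    exact (Set.ncard_le_ncard hS ((hTf d).union (hTf d'))).trans (Set.ncard_union_le _ _)
  have main : ∀ d₁, 2 < (T d₁).ncard → ∃ l : k, ∀ v, Gq z d₁ v = l * Gq y c v := by
    intro d₁ h2
    obtain ⟨a, ha, b, hb, e, he, hab, hae, hbe⟩ := (Set.two_lt_ncard (hTf d₁)).1 h2
    apply quadric_of_three y z h.c0 hab hae hbe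
    rintro s (rfl | rfl | rfl)
    · exact ha.2
    · exact hb.2
    · exact he.2
  by_cases h2 : 2 < (T d).ncard
  · exact ⟨d, Or.inl rfl, main d h2⟩
  · exact ⟨d', Or.inr rfl, main d' (by omega)⟩

theorem product_forms (y z : (Fin 4 → k) ≃ₗ[k] (Fin 4 → k)) {i i' : Fin 4} {P R : k}
    (h : ∀ v, z v i * z v i' = P * (y v 1 * y v 3) + R * (y v 0 * y v 2)) :
    ∃ j : Fin 4, (∀ j', j' ≠ j → z (y.symm (Pi.single j' 1)) i = 0) ∧
      (∀ j', j' ≠ j + 2 → z (y.symm (Pi.single j' 1)) i' = 0) := by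
  set a := fun i j => z (y.symm (Pi.single j 1)) i with ha
  have hz : ∀ v i, z v i = a i 0 * y v 0 + a i 1 * y v 1 + a i 2 * y v 2 + a i 3 * y v 3 :=
    fun v i => coord_expand y z v i
  have hne : ∀ i, a i 0 ≠ 0 ∨ a i 1 ≠ 0 ∨ a i 2 ≠ 0 ∨ a i 3 ≠ 0 := by
    intro i
    by_contra hcon
    push Not at hcon
    obtain ⟨h0, h1, h2, h3⟩ := hcon
    have := hz (z.symm (Pi.single i 1)) i
    rw [h0, h1, h2, h3] at this
    simp at this
  change ∃ j : Fin 4, (∀ j', j' ≠ j → a i j' = 0) ∧ (∀ j', j' ≠ j + 2 → a i' j' = 0)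
  clear_value a
  have key : ∀ w0 w1 w2 w3 : k, (a i 0 * w0 + a i 1 * w1 + a i 2 * w2 + a i 3 * w3) *
      (a i' 0 * w0 + a i' 1 * w1 + a i' 2 * w2 + a i' 3 * w3) = P * (w1 * w3) + R * (w0 * w2) := by
    intro w0 w1 w2 w3
    have := h (y.symm ![w0, w1, w2, w3])
    simp only [hz, LinearEquiv.apply_symm_apply] at this
    simpa using this
  have e0 : a i 0 * a i' 0 = 0 := by linear_combination key 1 0 0 0
  have e1 : a i 1 * a i' 1 = 0 := by linear_combination key 0 1 0 0
  have e2 : a i 2 * a i' 2 = 0 := by linear_combination key 0 0 1 0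
  have e3 : a i 3 * a i' 3 = 0 := by linear_combination key 0 0 0 1
  have e01 : a i 0 * a i' 1 + a i 1 * a i' 0 = 0 := by linear_combination key 1 1 0 0 - e0 - e1
  have e03 : a i 0 * a i' 3 + a i 3 * a i' 0 = 0 := by linear_combination key 1 0 0 1 - e0 - e3
  have e12 : a i 1 * a i' 2 + a i 2 * a i' 1 = 0 := by linear_combination key 0 1 1 0 - e1 - e2
  have e23 : a i 2 * a i' 3 + a i 3 * a i' 2 = 0 := by linear_combination key 0 0 1 1 - e2 - e3
  have hb := hne i'
  have four : ∀ (f : Fin 4 → k) (j : Fin 4), (j ≠ 0 → f 0 = 0) → (j ≠ 1 → f 1 = 0) →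
      (j ≠ 2 → f 2 = 0) → (j ≠ 3 → f 3 = 0) → ∀ j', j' ≠ j → f j' = 0 := by
    intro f j h0 h1 h2 h3 j' hj
    fin_cases j'
    · exact h0 hj.symm
    · exact h1 hj.symm
    · exact h2 hj.symm
    · exact h3 hj.symm
  have z2 : (2 : Fin 4) + 2 = 0 := rfl
  have z3 : (3 : Fin 4) + 2 = 1 := rfl
  have z1 : (1 : Fin 4) + 2 = 3 := rfl
  have z0 : (0 : Fin 4) + 2 = 2 := rfl
  rcases hne i with h0 | h0 | h0 | h0
  · refine ⟨0, ?_⟩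
    rw [z0]
    have b0 : a i' 0 = 0 := (mul_eq_zero.1 e0).resolve_left h0
    rw [b0, mul_zero, add_zero] at e01 e03
    have b1 := (mul_eq_zero.1 e01).resolve_left h0
    have b3 := (mul_eq_zero.1 e03).resolve_left h0
    have b2 : a i' 2 ≠ 0 := by simpa [b0, b1, b3] using hb
    rw [b1, mul_zero, add_zero] at e12
    rw [b3, mul_zero, zero_add] at e23
    have a1 := (mul_eq_zero.1 e12).resolve_right b2
    have a3 := (mul_eq_zero.1 e23).resolve_right b2
    have a2 := (mul_eq_zero.1 e2).resolve_right b2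
    constructor <;> apply four <;> intro hh <;> first | assumption | exact absurd rfl hh
  · refine ⟨1, ?_⟩
    rw [z1]
    have b1 : a i' 1 = 0 := (mul_eq_zero.1 e1).resolve_left h0
    rw [b1, mul_zero, zero_add] at e01
    rw [b1, mul_zero, add_zero] at e12
    have b0 := (mul_eq_zero.1 e01).resolve_left h0
    have b2 := (mul_eq_zero.1 e12).resolve_left h0
    have b3 : a i' 3 ≠ 0 := by simpa [b0, b1, b2] using hb
    rw [b0, mul_zero, add_zero] at e03
    rw [b2, mul_zero, add_zero] at e23
    have a1 := (mul_eq_zero.1 e03).resolve_right b3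
    have a3 := (mul_eq_zero.1 e23).resolve_right b3
    have a2 := (mul_eq_zero.1 e3).resolve_right b3
    constructor <;> apply four <;> intro hh <;> first | assumption | exact absurd rfl hh
  · refine ⟨2, ?_⟩
    rw [z2]
    have b2 : a i' 2 = 0 := (mul_eq_zero.1 e2).resolve_left h0
    rw [b2, mul_zero, zero_add] at e12
    rw [b2, mul_zero, add_zero] at e23
    have b1 := (mul_eq_zero.1 e12).resolve_left h0
    have b3 := (mul_eq_zero.1 e23).resolve_left h0
    have b0 : a i' 0 ≠ 0 := by simpa [b1, b2, b3] using hb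
    rw [b1, mul_zero, zero_add] at e01
    rw [b3, mul_zero, zero_add] at e03
    have a1 := (mul_eq_zero.1 e01).resolve_right b0
    have a3 := (mul_eq_zero.1 e03).resolve_right b0
    have a2 := (mul_eq_zero.1 e0).resolve_right b0
    constructor <;> apply four <;> intro hh <;> first | assumption | exact absurd rfl hh
  · refine ⟨3, ?_⟩
    rw [z3]
    have b3 : a i' 3 = 0 := (mul_eq_zero.1 e3).resolve_left h0
    rw [b3, mul_zero, zero_add] at e23 e03
    have b0 := (mul_eq_zero.1 e03).resolve_left h0
    have b2 := (mul_eq_zero.1 e23).resolve_left h0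
    have b1 : a i' 1 ≠ 0 := by simpa [b0, b2, b3] using hb
    rw [b0, mul_zero, add_zero] at e01
    rw [b2, mul_zero, zero_add] at e12
    have a1 := (mul_eq_zero.1 e01).resolve_right b1
    have a3 := (mul_eq_zero.1 e12).resolve_right b1
    have a2 := (mul_eq_zero.1 e1).resolve_right b1
    constructor <;> apply four <;> intro hh <;> first | assumption | exact absurd rfl hh

theorem fibre_frames (y z : (Fin 4 → k) ≃ₗ[k] (Fin 4 → k)) {S : Set k} {q : ℕ}
    {c c' d d' : k} (hq : 5 ≤ q + 1) (h : GoodS S q c c')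
    (hset : Rl y S c ∪ Rl (sw y) S c' = Rl z S d ∪ Rl (sw z) S d') :
    ∃ i₀ i₁ : Fin 4, (∀ j, j ≠ i₀ → z (y.symm (Pi.single j 1)) 0 = 0) ∧
      (∀ j, j ≠ i₀ + 2 → z (y.symm (Pi.single j 1)) 2 = 0) ∧
      (∀ j, j ≠ i₁ → z (y.symm (Pi.single j 1)) 1 = 0) ∧
      (∀ j, j ≠ i₁ + 2 → z (y.symm (Pi.single j 1)) 3 = 0) := by
  obtain ⟨d₁, -, l, hl⟩ := quadric_of_ruling y z hq h (hset ▸ Set.subset_union_left)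
  obtain ⟨d₂, -, m, hm⟩ := quadric_of_ruling (sw y) z hq h.symm (hset ▸ Set.subset_union_right)
  simp only [Gq_sw] at hm
  have hne : d₁ ≠ d₂ := by
    rintro rfl
    have hlm : l = m := by
      have h1 := hl (y.symm ![0, 1, 0, 1])
      rw [hm] at h1
      simp [Gq] at h1
      exact h1.symm
    have hc : l * c = m * c' := by
      have h1 := hl (y.symm ![1, 0, 1, 0])
      rw [hm] at h1
      simp [Gq] at h1
      exact h1.symm
    have hl0 : l ≠ 0 := by
      rintro rfl
      have h1 := hl (z.symm ![0, 1, 0, 1])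
      simp [Gq] at h1
    rw [← hlm] at hc
    exact h.cc (mul_left_cancel₀ hl0 hc)
  have hne' := sub_ne_zero.2 hne
  have e02 : ∀ v, z v 0 * z v 2 = ((m - l) / (d₁ - d₂)) * (y v 1 * y v 3) +
      ((l * c - m * c') / (d₁ - d₂)) * (y v 0 * y v 2) := by
    intro v
    have h1 := hl v
    have h2 := hm v
    unfold Gq at h1 h2
    field_simp
    linear_combination h2 - h1
  have e13 : ∀ v, z v 1 * z v 3 = ((d₁ * m - d₂ * l) / (d₁ - d₂)) * (y v 1 * y v 3) +
      ((d₂ * l * c - d₁ * m * c') / (d₁ - d₂)) * (y v 0 * y v 2) := by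
    intro v
    have h1 := hl v
    have h2 := hm v
    unfold Gq at h1 h2
    field_simp
    linear_combination d₁ * h2 - d₂ * h1
  obtain ⟨i₀, a1, a2⟩ := product_forms y z e02
  obtain ⟨i₁, a3, a4⟩ := product_forms y z e13
  exact ⟨i₀, i₁, a1, a2, a3, a4⟩

theorem fibre_const (z : (Fin 4 → k) ≃ₗ[k] (Fin 4 → k)) {S : Set k} {q : ℕ}
    {c c' d d' : k} (h : GoodS S q c c')
    (hset : Rl z S c ∪ Rl (sw z) S c' = Rl z S d ∪ Rl (sw z) S d') : c = d := by
  have hne : S.Nonempty := by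
    rw [← Set.ncard_pos h.fin, h.card]; omega
  obtain ⟨s, hs⟩ := hne
  have hs0 := h.ne s hs
  have hmem : Ln z c s ∈ Rl z S d ∪ Rl (sw z) S d' := hset ▸ Or.inl ⟨s, hs, rfl⟩
  have m1 : z.symm ![1, s, 0, 0] ∈ Ln z c s := by rw [mem_Ln]; simp
  have m2 : z.symm ![0, 0, s, c] ∈ Ln z c s := by rw [mem_Ln]; simp [mul_comm]
  rcases hmem with ⟨t, ht, he⟩ | ⟨t, ht, he⟩
  · rw [← he, mem_Ln] at m1 m2
    simp at m1 m2
    subst m1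
    rw [mul_comm] at m2
    exact mul_right_cancel₀ hs0 m2
  · rw [← he, mem_Ln, sw0, sw1] at m1
    simp at m1
    exact absurd m1.1.symm (h.ne t ht)

theorem fibre_const2 (z : (Fin 4 → k) ≃ₗ[k] (Fin 4 → k)) {S : Set k} {q : ℕ}
    {c c' d d' : k} (h : GoodS S q c c')
    (hset : Rl z S c ∪ Rl (sw z) S c' = Rl z S d ∪ Rl (sw z) S d') : c = d ∧ c' = d' := by
  refine ⟨fibre_const z h hset, fibre_const (d' := d) (sw z) h.symm ?_⟩
  rw [sw_sw, Set.union_comm, hset, Set.union_comm]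

end Fibre

section FieldFacts

variable {k : Type*} [Field k] [IsAlgClosed k]

theorem ncard_roots {n : ℕ} (hn : (n : k) ≠ 0) {c : k} (hc : c ≠ 0) :
    {x : k | x ^ n = c}.ncard = n ∧ {x : k | x ^ n = c}.Finite := by
  classical
  have hn0 : n ≠ 0 := by rintro rfl; simp at hn
  have hsep : (Polynomial.X ^ n - Polynomial.C c : Polynomial k).Separable :=
    Polynomial.separable_X_pow_sub_C c hn hc
  have hset : {x : k | x ^ n = c} =
      ((Polynomial.X ^ n - Polynomial.C c : Polynomial k).roots.toFinset : Set k) := by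
    ext x
    have h0 : (Polynomial.X ^ n - Polynomial.C c : Polynomial k) ≠ 0 := hsep.ne_zero
    simp [h0, sub_eq_zero]
  rw [hset]
  refine ⟨?_, Finset.finite_toSet _⟩
  rw [Set.ncard_coe_finset, Multiset.toFinset_card_of_nodup (Polynomial.nodup_roots hsep),
    ← (IsAlgClosed.splits _).natDegree_eq_card_roots, Polynomial.natDegree_X_pow_sub_C]

/-- The facts about `q` used below: `q`-th powers are additive and `q = 0` in `k`. -/
structure QF (k : Type*) [Field k] (q : ℕ) : Prop where
  frob : ∀ a b : k, (a + b) ^ q = a ^ q + b ^ q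
  zero : (q : k) = 0
  two : 2 ≤ q

end FieldFacts

theorem QF.mk' {k : Type*} [Field k] {p e q : ℕ} (hp : p.Prime) (hchar : CharP k p) (he : 1 ≤ e)
    (hq : q = p ^ e) : QF k q where
  frob := by
    subst hq
    have := Fact.mk hp
    intro a b
    exact add_pow_char_pow a b p e
  zero := by
    subst hq
    rw [Nat.cast_pow, CharP.cast_eq_zero k p, zero_pow (by omega)]
  two := by
    subst hq
    exact hp.two_le.trans (Nat.le_self_pow (by omega) p)

namespace QF

variable {k : Type*} [Field k] {q : ℕ}

theorem q0 (H : QF k q) : q ≠ 0 := by have := H.two; omega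

theorem pow_neg (H : QF k q) (a : k) : (-a) ^ q = -a ^ q := by
  have := H.frob a (-a)
  rw [add_neg_cancel, zero_pow H.q0] at this
  linear_combination -this

theorem pow_sum (H : QF k q) {ι : Type*} (s : Finset ι) (f : ι → k) :
    (∑ i ∈ s, f i) ^ q = ∑ i ∈ s, f i ^ q := by
  classical
  induction s using Finset.induction_on with
  | empty => simp [H.q0]
  | insert a s ha ih => rw [Finset.sum_insert ha, Finset.sum_insert ha, H.frob, ih]

/-- The subfield with `q ^ 2` elements. -/
def Kf (H : QF k q) : Subfield k where
  carrier := {x | x ^ (q * q) = x}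
  mul_mem' := by
    intro a b ha hb
    change (a * b) ^ (q * q) = a * b
    rw [mul_pow, show a ^ (q * q) = a from ha, show b ^ (q * q) = b from hb]
  one_mem' := one_pow _
  add_mem' := by
    intro a b ha hb
    change (a + b) ^ (q * q) = a + b
    rw [pow_mul, H.frob, H.frob, ← pow_mul, ← pow_mul, show a ^ (q * q) = a from ha,
      show b ^ (q * q) = b from hb]
  zero_mem' := zero_pow (Nat.mul_ne_zero H.q0 H.q0)
  neg_mem' := by
    intro a ha
    change (-a) ^ (q * q) = -a
    rw [pow_mul, H.pow_neg, H.pow_neg, ← pow_mul, show a ^ (q * q) = a from ha]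
  inv_mem' := by
    intro a ha
    change (a⁻¹) ^ (q * q) = a⁻¹
    rw [inv_pow, show a ^ (q * q) = a from ha]

theorem mem_Kf (H : QF k q) (x : k) : x ∈ H.Kf ↔ x ^ (q * q) = x := Iff.rfl

variable [IsAlgClosed k]

theorem card_fix (H : QF k q) : {x : k | x ^ (q * q) = x}.ncard = q * q ∧
    {x : k | x ^ (q * q) = x}.Finite := by
  have h2 := H.two
  have hqq : 4 ≤ q * q := Nat.mul_le_mul h2 h2
  have hset : {x : k | x ^ (q * q) = x} = insert 0 {x : k | x ^ (q * q - 1) = 1} := by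
    ext x
    simp only [Set.mem_ofPred_eq, Set.mem_insert_iff]
    have hs : x ^ (q * q) = x ^ (q * q - 1) * x := by
      rw [← pow_succ]; congr 1; omega
    rw [hs]
    constructor
    · intro h
      by_cases hx : x = 0
      · exact Or.inl hx
      · right
        exact mul_right_cancel₀ hx (h.trans (one_mul x).symm)
    · rintro (rfl | h)
      · simp
      · rw [h, one_mul]
  have hn : ((q * q - 1 : ℕ) : k) ≠ 0 := by
    rw [Nat.cast_sub (by omega), Nat.cast_mul, H.zero]
    simp
  obtain ⟨h1, h2⟩ := ncard_roots hn (one_ne_zero : (1 : k) ≠ 0)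
  rw [hset]
  refine ⟨?_, h2.insert 0⟩
  rw [Set.ncard_insert_of_notMem _ h2, h1]
  · omega
  · simp only [Set.mem_ofPred_eq]
    rw [zero_pow (by omega)]
    exact zero_ne_one

theorem card_norm (H : QF k q) {c : k} (hc : c ≠ 0) : {x : k | x ^ (q + 1) = c}.ncard = q + 1 ∧
    {x : k | x ^ (q + 1) = c}.Finite := by
  apply ncard_roots _ hc
  rw [Nat.cast_add, H.zero]
  simp

theorem card_Kf (H : QF k q) : Nat.card H.Kf = q ^ 2 := by
  rw [sq, ← H.card_fix.1]
  exact Nat.card_coe_set_eq _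

theorem finite_Kf (H : QF k q) : Finite H.Kf :=
  H.card_fix.2.to_subtype

theorem norm_Kf (H : QF k q) (c : H.Kf) (hc : c ≠ 0) (hcq : c ^ q = c) :
    Nat.card {x : H.Kf // x ^ (q + 1) = c} = q + 1 := by
  have hc' : (c : k) ≠ 0 := by simpa using hc
  refine Eq.trans ?_ (H.card_norm hc').1
  rw [← Nat.card_coe_set_eq]
  have hcq' : (c : k) ^ q = c := by exact_mod_cast congrArg Subtype.val hcq
  refine Nat.card_congr
    { toFun := fun x => ⟨x.1.1, ?_⟩
      invFun := fun x => ⟨⟨x.1, ?_⟩, ?_⟩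
      left_inv := fun x => rfl
      right_inv := fun x => rfl }
  · exact congrArg Subtype.val x.2
  · rw [mem_Kf]
    have hx : x.1 ^ (q + 1) = c := x.2
    have hx0 : x.1 ≠ 0 := by
      intro h0
      rw [h0, zero_pow (by omega)] at hx
      exact hc' hx.symm
    have h1 : (x.1 ^ (q + 1)) ^ q = x.1 ^ (q + 1) := by rw [hx, hcq']
    rw [← pow_mul, add_mul, one_mul, pow_add, pow_succ, mul_comm] at h1
    exact mul_left_cancel₀ (pow_ne_zero q hx0) h1
  · exact Subtype.ext x.2

theorem trace_Kf (H : QF k q) : ∃ m : H.Kf, m + m ^ q ≠ 0 := by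
  by_contra hcon
  push Not at hcon
  have h2 := H.two
  have h1 : (1 : k) + 1 = 0 := by
    have := congrArg Subtype.val (hcon 1)
    simpa using this
  have hn : ((q - 1 : ℕ) : k) ≠ 0 := by
    rw [Nat.cast_sub (by omega), H.zero]
    simp
  obtain ⟨h3, h4⟩ := ncard_roots hn (one_ne_zero : (1 : k) ≠ 0)
  have hsub : {x : k | x ^ (q * q) = x} ⊆ insert 0 {x : k | x ^ (q - 1) = 1} := by
    intro x hx
    by_cases hx0 : x = 0
    · exact Or.inl hx0
    · right
      have h5 : x + x ^ q = 0 := by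
        have := congrArg Subtype.val (hcon ⟨x, hx⟩)
        simpa using this
      have hs : x ^ q = x ^ (q - 1) * x := by
        rw [← pow_succ]; congr 1; omega
      apply mul_right_cancel₀ hx0
      rw [← hs]
      linear_combination h5 - x * h1
  have h6 := Set.ncard_le_ncard hsub (h4.insert 0)
  have h7 := Set.ncard_insert_le 0 {x : k | x ^ (q - 1) = 1}
  rw [H.card_fix.1] at h6
  rw [h3] at h7
  have : q * 2 ≤ q * q := Nat.mul_le_mul_left q h2
  omega

end QF

section Form

variable {k : Type*} [Field k] {q : ℕ}

/-- The sesquilinear form attached to `A`. -/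
def bt (q : ℕ) (A : Matrix (Fin 4) (Fin 4) k) (x y : Fin 4 → k) : k :=
  ∑ i, ∑ j, A i j * x i ^ q * y j

theorem bt_self (A : Matrix (Fin 4) (Fin 4) k) (x : Fin 4 → k) : bt q A x x = frobForm q A x := rfl

theorem bt_add (A : Matrix (Fin 4) (Fin 4) k) (x y z : Fin 4 → k) :
    bt q A x (y + z) = bt q A x y + bt q A x z := by
  simp only [bt, ← Finset.sum_add_distrib, Pi.add_apply, mul_add]

theorem bt_smul (A : Matrix (Fin 4) (Fin 4) k) (x : Fin 4 → k) (c : k) (y : Fin 4 → k) :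
    bt q A x (c • y) = c * bt q A x y := by
  simp only [bt, Finset.mul_sum, Pi.smul_apply, smul_eq_mul]
  exact Finset.sum_congr rfl fun i _ => Finset.sum_congr rfl fun j _ => by ring

theorem bt_ladd (H : QF k q) (A : Matrix (Fin 4) (Fin 4) k) (x y z : Fin 4 → k) :
    bt q A (x + y) z = bt q A x z + bt q A y z := by
  simp only [bt, ← Finset.sum_add_distrib, Pi.add_apply, H.frob, mul_add, add_mul]

theorem bt_lsmul (A : Matrix (Fin 4) (Fin 4) k) (x : Fin 4 → k) (c : k) (y : Fin 4 → k) :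
    bt q A (c • x) y = c ^ q * bt q A x y := by
  simp only [bt, Finset.mul_sum, Pi.smul_apply, smul_eq_mul, mul_pow]
  exact Finset.sum_congr rfl fun i _ => Finset.sum_congr rfl fun j _ => by ring

/-- The form as a linear functional in the second variable. -/
def btl (q : ℕ) (A : Matrix (Fin 4) (Fin 4) k) (x : Fin 4 → k) : (Fin 4 → k) →ₗ[k] k where
  toFun := bt q A x
  map_add' := bt_add A x
  map_smul' := bt_smul A x

theorem btl_apply (A : Matrix (Fin 4) (Fin 4) k) (x y : Fin 4 → k) :
    btl q A x y = bt q A x y := rfl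

theorem bt_sum (A : Matrix (Fin 4) (Fin 4) k) (x : Fin 4 → k) {ι : Type*} (s : Finset ι)
    (f : ι → Fin 4 → k) : bt q A x (∑ i ∈ s, f i) = ∑ i ∈ s, bt q A x (f i) := by
  simp only [← btl_apply, map_sum]

theorem bt_sub (A : Matrix (Fin 4) (Fin 4) k) (x y z : Fin 4 → k) :
    bt q A x (y - z) = bt q A x y - bt q A x z := by
  simp only [← btl_apply, map_sub]

theorem bt_lsum (H : QF k q) (A : Matrix (Fin 4) (Fin 4) k) (y : Fin 4 → k) {ι : Type*}
    (s : Finset ι) (f : ι → Fin 4 → k) :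
    bt q A (∑ i ∈ s, f i) y = ∑ i ∈ s, bt q A (f i) y := by
  have h0 : bt q A 0 y = 0 := by simp [bt, H.q0]
  exact map_sum (⟨⟨fun x => bt q A x y, h0⟩, fun a b => bt_ladd H A a b y⟩ :
    (Fin 4 → k) →+ k) f s

theorem bt_eq_mulVec (A : Matrix (Fin 4) (Fin 4) k) (x y : Fin 4 → k) :
    bt q A x y = ∑ i, x i ^ q * (A.mulVec y) i := by
  simp only [bt, Matrix.mulVec, dotProduct, Finset.mul_sum]
  exact Finset.sum_congr rfl fun i _ => Finset.sum_congr rfl fun j _ => by ring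

theorem bt_eq_vecMul (A : Matrix (Fin 4) (Fin 4) k) (x y : Fin 4 → k) :
    bt q A x y = ∑ j, (Matrix.vecMul (fun i => x i ^ q) A) j * y j := by
  simp only [bt, Matrix.vecMul, dotProduct, Finset.sum_mul]
  rw [Finset.sum_comm]
  exact Finset.sum_congr rfl fun i _ => Finset.sum_congr rfl fun j _ => by ring

theorem bt_nd_left (H : QF k q) {A : Matrix (Fin 4) (Fin 4) k} (hA : IsUnit A) {x : Fin 4 → k}
    (h : ∀ y, bt q A x y = 0) : x = 0 := by
  have h1 : Matrix.vecMul (fun i => x i ^ q) A = 0 := by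
    ext j
    have := h (Pi.single j 1)
    rw [bt_eq_vecMul] at this
    simpa [Pi.single_apply] using this
  have h2 : (fun i => x i ^ q) = 0 := by
    apply Matrix.vecMul_injective_of_isUnit hA
    simpa using h1
  ext i
  exact pow_eq_zero_iff H.q0 |>.1 (congrFun h2 i)

theorem bt_nd_right (H : QF k q) {A : Matrix (Fin 4) (Fin 4) k} (hA : IsUnit A) {y : Fin 4 → k}
    (h : ∀ x, bt q A x y = 0) : y = 0 := by
  have h1 : A.mulVec y = 0 := by
    ext i
    have := h (Pi.single i 1)
    rw [bt_eq_mulVec] at this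
    simpa [Pi.single_apply, H.q0, ite_pow] using this
  apply Matrix.mulVec_injective_of_isUnit hA
  simpa using h1

theorem bt_ext (H : QF k q) {A : Matrix (Fin 4) (Fin 4) k} (hA : IsUnit A) {u v : Fin 4 → k}
    (h : ∀ x, bt q A x u = bt q A x v) : u = v := by
  apply sub_eq_zero.1
  apply bt_nd_right H hA
  intro x
  rw [bt_sub, h, sub_self]

theorem exists_psi (H : QF k q) {A : Matrix (Fin 4) (Fin 4) k} (hA : IsUnit A) (x : Fin 4 → k) :
    ∃ u, ∀ y, bt q A y u = (bt q A x y) ^ q := by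
  refine ⟨A⁻¹.mulVec (fun j => (Matrix.vecMul (fun i => x i ^ q) A j) ^ q), fun y => ?_⟩
  rw [bt_eq_mulVec, Matrix.mulVec_mulVec, Matrix.mul_nonsing_inv _ ((Matrix.isUnit_iff_isUnit_det A).1 hA),
    Matrix.one_mulVec, bt_eq_vecMul, H.pow_sum]
  exact Finset.sum_congr rfl fun i _ => by rw [mul_pow]; ring

/-- The twisted Frobenius map of the surface. -/
noncomputable def psi (H : QF k q) {A : Matrix (Fin 4) (Fin 4) k} (hA : IsUnit A)
    (x : Fin 4 → k) : Fin 4 → k := (exists_psi H hA x).choose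

theorem bt_psi (H : QF k q) {A : Matrix (Fin 4) (Fin 4) k} (hA : IsUnit A) (x y : Fin 4 → k) :
    bt q A y (psi H hA x) = (bt q A x y) ^ q := (exists_psi H hA x).choose_spec y

theorem psi_add (H : QF k q) {A : Matrix (Fin 4) (Fin 4) k} (hA : IsUnit A) (x y : Fin 4 → k) :
    psi H hA (x + y) = psi H hA x + psi H hA y := by
  apply bt_ext H hA
  intro z
  rw [bt_psi, bt_ladd H, H.frob, bt_add, bt_psi, bt_psi]

theorem psi_smul (H : QF k q) {A : Matrix (Fin 4) (Fin 4) k} (hA : IsUnit A) (c : k)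
    (x : Fin 4 → k) : psi H hA (c • x) = c ^ (q * q) • psi H hA x := by
  apply bt_ext H hA
  intro z
  rw [bt_psi, bt_lsmul, mul_pow, bt_smul, bt_psi, pow_mul]

theorem psi_inj (H : QF k q) {A : Matrix (Fin 4) (Fin 4) k} (hA : IsUnit A)
    (x : Fin 4 → k) (hx : psi H hA x = 0) : x = 0 := by
  apply bt_nd_left H hA
  intro y
  have := bt_psi H hA x y
  rw [hx] at this
  have h0 : bt q A y 0 = 0 := map_zero (btl q A y)
  rw [h0] at this
  exact pow_eq_zero_iff H.q0 |>.1 this.symm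

theorem bt_herm (H : QF k q) {A : Matrix (Fin 4) (Fin 4) k} (hA : IsUnit A) {x : Fin 4 → k}
    (hx : psi H hA x = x) (y : Fin 4 → k) : bt q A y x = (bt q A x y) ^ q := by
  rw [← bt_psi H hA, hx]

variable [IsAlgClosed k]

theorem exists_basis (H : QF k q) {A : Matrix (Fin 4) (Fin 4) k} (hA : IsUnit A) :
    ∃ b : Basis (Fin 4) k (Fin 4 → k), ∀ i, psi H hA (b i) = b i := by
  have h2 := H.two
  have hs := lang_span_s7 (k := k) (V := Fin 4 → k) (q * q) (by nlinarith) (psi H hA)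
    (psi_add H hA) (psi_smul H hA) (psi_inj H hA)
  let b := Basis.ofSpan hs.ge
  have hb : ∀ i, psi H hA (b i) = b i := fun i => Basis.ofSpan_subset hs.ge ⟨i, rfl⟩
  have : Fintype _ := FiniteDimensional.fintypeBasisIndex b
  have e := Fintype.equivFinOfCardEq (n := 4) (by rw [← finrank_eq_card_basis b]; simp)
  exact ⟨b.reindex e, fun i => by rw [Basis.reindex_apply]; exact hb _⟩

end Form

section Rational

variable {k : Type*} [Field k] {q : ℕ}

/-- The rational structure given by a basis. -/
noncomputable def iota (H : QF k q) (b : Basis (Fin 4) k (Fin 4 → k)) (x : Fin 4 → H.Kf) : Fin 4 → k :=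
  ∑ i, (x i : k) • b i

theorem iota_inj (H : QF k q) (b : Basis (Fin 4) k (Fin 4 → k)) :
    Function.Injective (iota H b) := by
  intro x y hxy
  ext i
  have h1 : ∀ z : Fin 4 → H.Kf, b.repr (iota H b z) i = z i := by
    intro z
    unfold iota
    rw [b.repr_sum_self]
  rw [← h1 x, ← h1 y, hxy]

theorem iota_add (H : QF k q) (b : Basis (Fin 4) k (Fin 4 → k)) (x y : Fin 4 → H.Kf) :
    iota H b (x + y) = iota H b x + iota H b y := by
  simp [iota, add_smul, Finset.sum_add_distrib]

theorem iota_smul (H : QF k q) (b : Basis (Fin 4) k (Fin 4 → k)) (c : H.Kf) (x : Fin 4 → H.Kf) :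
    iota H b (c • x) = (c : k) • iota H b x := by
  simp [iota, mul_smul, Finset.smul_sum]

theorem psi_sum (H : QF k q) {A : Matrix (Fin 4) (Fin 4) k} (hA : IsUnit A) {ι : Type*}
    (s : Finset ι) (f : ι → Fin 4 → k) :
    psi H hA (∑ i ∈ s, f i) = ∑ i ∈ s, psi H hA (f i) :=
  map_sum (AddMonoidHom.mk' (psi H hA) (psi_add H hA)) f s

theorem psi_iota (H : QF k q) {A : Matrix (Fin 4) (Fin 4) k} (hA : IsUnit A)
    {b : Basis (Fin 4) k (Fin 4 → k)} (hb : ∀ i, psi H hA (b i) = b i) (x : Fin 4 → H.Kf) :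
    psi H hA (iota H b x) = iota H b x := by
  unfold iota
  rw [psi_sum]
  refine Finset.sum_congr rfl fun i _ => ?_
  rw [psi_smul, hb, show (x i : k) ^ (q * q) = x i from (x i).2]

variable [IsAlgClosed k]

theorem fix_finite (H : QF k q) {A : Matrix (Fin 4) (Fin 4) k} (hA : IsUnit A) :
    {v | psi H hA v = v}.Finite := by
  obtain ⟨b, hb⟩ := exists_basis H hA
  have := H.finite_Kf
  refine (Set.finite_range (iota H b)).subset ?_
  intro v hv
  have hv' : psi H hA v = v := hv
  have h1 : ∑ i, b.repr v i • b i = v := b.sum_repr v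
  have h2 : ∀ i, b.repr v i ^ (q * q) = b.repr v i := by
    intro i
    have h3 : ∑ i, b.repr v i ^ (q * q) • b i = v := by
      rw [← hv']
      conv_rhs => rw [← h1]
      rw [psi_sum]
      refine Finset.sum_congr rfl fun i _ => ?_
      rw [psi_smul, hb, hv']
    conv_rhs => rw [← h3]
    rw [b.repr_sum_self]
  exact ⟨fun i => ⟨b.repr v i, h2 i⟩, h1⟩

theorem frames_exist (H : QF k q) {A : Matrix (Fin 4) (Fin 4) k} (hA : IsUnit A) :
    ∃ T : Finset (Fin 4 → Fin 4 → k),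
      ∏ i ∈ Finset.range 4, (HermData.uz q (i + 1)).1 ≤ T.card ∧
      ∀ f ∈ T, (∀ i j, bt q A (f i) (f j) = if i = j then 1 else 0) ∧
        ∀ i v, bt q A v (f i) = (bt q A (f i) v) ^ q := by
  classical
  obtain ⟨b, hb⟩ := exists_basis H hA
  have hfix := psi_iota H hA hb
  have hmem : ∀ x y, bt q A (iota H b x) (iota H b y) ∈ H.Kf := by
    intro x y
    rw [H.mem_Kf, pow_mul, ← bt_herm H hA (hfix x), ← bt_herm H hA (hfix y)]
  let h : (Fin 4 → H.Kf) → (Fin 4 → H.Kf) → H.Kf := fun x y => ⟨_, hmem x y⟩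
  have := H.finite_Kf
  have HD : HermData H.Kf (Fin 4 → H.Kf) q h :=
    { hadd := fun x y z => Subtype.ext (by simp [h, iota_add, bt_add])
      hsmul := fun x c y => Subtype.ext (by simp [h, iota_smul, bt_smul])
      herm := fun x y => Subtype.ext (by simp [h, ← bt_herm H hA (hfix x)])
      frob := fun a b => Subtype.ext (by simp [H.frob])
      qq := fun a => Subtype.ext (by push_cast; exact a.2)
      card := H.card_Kf
      hq := H.two
      norm := H.norm_Kf
      trace := H.trace_Kf }
  have hnd : HermData.ND h ⊤ := by
    intro x _ hx
    apply iota_inj H b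
    have h0 : iota H b 0 = 0 := by simp [iota]
    rw [h0]
    apply bt_nd_left H hA
    intro v
    have hbi : ∀ i, bt q A (iota H b x) (b i) = 0 := by
      intro i
      have h1 := congrArg Subtype.val (hx (Pi.single i 1) trivial)
      have h2 : iota H b (Pi.single i 1) = b i := by
        unfold iota
        rw [Finset.sum_eq_single i]
        · simp
        · intro j _ hj
          simp [hj]
        · simp
      simpa [h, h2] using h1
    rw [← b.sum_repr v, bt_sum]
    apply Finset.sum_eq_zero
    intro i _
    rw [bt_smul, hbi, mul_zero]
  have hcard : Nat.card (⊤ : Submodule H.Kf (Fin 4 → H.Kf)) = (q ^ 2) ^ 4 := by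
    rw [Nat.card_congr (Submodule.topEquiv (R := H.Kf) (M := Fin 4 → H.Kf)).toEquiv, Nat.card_fun,
      H.card_Kf]
    simp
  have hmain := HD.card_frames 4 ⊤ hnd hcard
  have : Fintype {x : Fin 4 → Fin 4 → H.Kf // HermData.IsFrame h ⊤ 4 x} := Fintype.ofFinite _
  refine ⟨Finset.univ.image (fun x : {x : Fin 4 → Fin 4 → H.Kf // HermData.IsFrame h ⊤ 4 x} =>
    fun i => iota H b (x.1 i)), ?_, ?_⟩
  · rw [Finset.card_image_of_injective, Finset.card_univ, ← Nat.card_eq_fintype_card]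
    · exact hmain
    · intro x y hxy
      apply Subtype.ext
      funext i
      exact iota_inj H b (congrFun hxy i)
  · intro f hf
    obtain ⟨x, -, rfl⟩ := Finset.mem_image.1 hf
    refine ⟨fun i j => ?_, fun i v => bt_herm H hA (hfix _) v⟩
    have h1 := congrArg Subtype.val (x.2.2 i j)
    simp only [h] at h1
    rw [h1]
    split_ifs <;> rfl

theorem line_isotropic (H : QF k q) {A : Matrix (Fin 4) (Fin 4) k}
    {L : Submodule k (Fin 4 → k)} (hL : ∀ v ∈ L, bt q A v v = 0) :
    ∀ v ∈ L, ∀ w ∈ L, bt q A v w = 0 := by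
  intro v hv w hw
  have hc : ∃ c : k, c ^ q ≠ c := by
    by_contra hcon
    push Not at hcon
    apply Set.infinite_univ (α := k)
    refine H.card_fix.2.subset fun x _ => ?_
    change x ^ (q * q) = x
    rw [pow_mul, hcon, hcon]
  obtain ⟨c, hc⟩ := hc
  have key : ∀ c : k, c ^ q * bt q A w v + c * bt q A v w = 0 := by
    intro c
    have h1 := hL (v + c • w) (L.add_mem hv (L.smul_mem c hw))
    rw [bt_add, bt_ladd H, bt_ladd H, bt_smul, bt_smul, bt_lsmul, bt_lsmul, hL v hv, hL w hw] at h1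
    linear_combination h1
  have h1 := key 1
  have h2 := key c
  rw [one_pow] at h1
  have h3 : (c ^ q - c) * bt q A v w = 0 := by linear_combination c ^ q * h1 - h2
  exact (mul_eq_zero.1 h3).resolve_left (sub_ne_zero.2 hc)

theorem line_stable (H : QF k q) {A : Matrix (Fin 4) (Fin 4) k} (hA : IsUnit A)
    {L : Submodule k (Fin 4 → k)} (hdim : finrank k L = 2) (hL : ∀ v ∈ L, bt q A v v = 0) :
    ∀ v ∈ L, psi H hA v ∈ L := by
  have hiso := line_isotropic H hL
  let B : Basis (Fin 2) k L := finBasisOfFinrankEq k L hdim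
  have hli : LinearIndependent k (fun i => btl q A (B i : Fin 4 → k)) := by
    rw [Fintype.linearIndependent_iff]
    intro g hg
    choose d hd using fun i => IsAlgClosed.exists_pow_nat_eq (g i) (Nat.pos_of_ne_zero H.q0)
    have h0 : ∑ i, d i • (B i : Fin 4 → k) = 0 := by
      apply bt_nd_left H hA
      intro y
      rw [bt_lsum H]
      have h1 := LinearMap.congr_fun hg y
      simp only [bt_lsmul, hd]
      simpa [LinearMap.sum_apply, btl_apply] using h1
    have h2 : ∑ i, d i • B i = 0 := by
      apply Subtype.ext
      simpa using h0
    intro i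
    rw [← hd i, Fintype.linearIndependent_iff.1 B.linearIndependent d h2 i, zero_pow H.q0]
  let W : Subspace k (Dual k (Fin 4 → k)) :=
    Submodule.span k (Set.range fun i => btl q A (B i : Fin 4 → k))
  have hW : finrank k W = 2 := by
    rw [finrank_span_eq_card hli]; simp
  have hco : finrank k W.dualCoannihilator = 2 := by
    have := Subspace.finrank_add_finrank_dualCoannihilator_eq W
    rw [hW] at this
    rw [Module.finrank_fin_fun] at this
    omega
  have hmem : ∀ u, u ∈ W.dualCoannihilator ↔ ∀ i, bt q A (B i) u = 0 := by
    intro u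
    rw [Submodule.mem_dualCoannihilator]
    constructor
    · intro h i
      exact h _ (Submodule.subset_span ⟨i, rfl⟩)
    · intro h φ hφ
      induction hφ using Submodule.span_induction with
      | mem x hx => obtain ⟨i, rfl⟩ := hx; exact h i
      | zero => rfl
      | add x y _ _ hx hy => rw [LinearMap.add_apply, hx, hy, add_zero]
      | smul c x _ hx => rw [LinearMap.smul_apply, hx, smul_zero]
  have hle : L ≤ W.dualCoannihilator := by
    intro v hv
    rw [hmem]
    intro i
    exact hiso _ (B i).2 v hv
  have heq : L = W.dualCoannihilator := Submodule.eq_of_le_of_finrank_eq hle (hdim.trans hco.symm)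
  intro v hv
  have : psi H hA v ∈ W.dualCoannihilator := by
    rw [hmem]
    intro i
    rw [bt_psi, hiso v hv _ (B i).2, zero_pow H.q0]
  rwa [← heq] at this

theorem lines_finite (H : QF k q) {A : Matrix (Fin 4) (Fin 4) k} (hA : IsUnit A) :
    {L : Submodule k (Fin 4 → k) | IsLineOn (extremalCone k q A) L}.Finite := by
  refine ((fix_finite H hA).finite_subsets.image (Submodule.span k)).subset ?_
  rintro L ⟨hdim, hL⟩
  have hst := line_stable H hA hdim hL
  have h2 := H.two
  have hs := lang_span_s7 (k := k) (V := L) (q * q) (by nlinarith) (fun v => ⟨psi H hA v, hst v v.2⟩)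
    (fun v w => Subtype.ext (psi_add H hA _ _)) (fun c v => Subtype.ext (psi_smul H hA _ _))
    (fun v hv => Subtype.ext (psi_inj H hA _ (congrArg Subtype.val hv)))
  refine ⟨Set.image L.subtype {v : L | (⟨psi H hA v, hst v v.2⟩ : L) = v}, ?_, ?_⟩
  · rintro _ ⟨v, hv, rfl⟩
    exact congrArg Subtype.val hv
  · rw [← Submodule.map_span, hs, Submodule.map_top, Submodule.range_subtype]

end Rational

section Count

variable {k : Type*} [Field k] {q : ℕ}

/-- Orthonormal frames of the surface. -/
def OrthFrame (q : ℕ) (A : Matrix (Fin 4) (Fin 4) k) (f : Fin 4 → Fin 4 → k) : Prop :=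
  (∀ i j, bt q A (f i) (f j) = if i = j then 1 else 0) ∧
    ∀ i v, bt q A v (f i) = (bt q A (f i) v) ^ q

theorem frame_equiv (A : Matrix (Fin 4) (Fin 4) k) (f : Fin 4 → Fin 4 → k) :
    ∃ y : (Fin 4 → k) ≃ₗ[k] (Fin 4 → k), OrthFrame q A f → ∀ v i, y v i = bt q A (f i) v := by
  by_cases hf : OrthFrame q A f
  · let g : (Fin 4 → k) →ₗ[k] (Fin 4 → k) := LinearMap.pi fun i => btl q A (f i)
    have hsurj : Function.Surjective g := by
      intro w
      refine ⟨∑ j, w j • f j, ?_⟩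
      ext i
      change bt q A (f i) (∑ j, w j • f j) = w i
      rw [bt_sum]
      simp [bt_smul, hf.1]
    have hbij : Function.Bijective g := ⟨LinearMap.injective_iff_surjective.2 hsurj, hsurj⟩
    exact ⟨LinearEquiv.ofBijective g hbij, fun _ v i => rfl⟩
  · exact ⟨LinearEquiv.refl k _, fun h => absurd h hf⟩

theorem frame_symm {A : Matrix (Fin 4) (Fin 4) k} {f : Fin 4 → Fin 4 → k}
    (hf : OrthFrame q A f) {y : (Fin 4 → k) ≃ₗ[k] (Fin 4 → k)}
    (hy : ∀ v i, y v i = bt q A (f i) v) (j : Fin 4) : y.symm (Pi.single j 1) = f j := by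
  rw [LinearEquiv.symm_apply_eq]
  ext i
  rw [hy, hf.1, Pi.single_apply]

theorem frame_expand {A : Matrix (Fin 4) (Fin 4) k} {f : Fin 4 → Fin 4 → k}
    (hf : OrthFrame q A f) {y : (Fin 4 → k) ≃ₗ[k] (Fin 4 → k)}
    (hy : ∀ v i, y v i = bt q A (f i) v) (v : Fin 4 → k) : v = ∑ j, y v j • f j := by
  apply y.injective
  ext i
  rw [hy (∑ j, y v j • f j), bt_sum]
  simp [bt_smul, hf.1]

theorem frame_form (H : QF k q) {A : Matrix (Fin 4) (Fin 4) k} {f : Fin 4 → Fin 4 → k}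
    (hf : OrthFrame q A f) {y : (Fin 4 → k) ≃ₗ[k] (Fin 4 → k)}
    (hy : ∀ v i, y v i = bt q A (f i) v) (v : Fin 4 → k) :
    frobForm q A v = y v 0 ^ (q + 1) + y v 1 ^ (q + 1) + y v 2 ^ (q + 1) + y v 3 ^ (q + 1) := by
  have h1 : frobForm q A v = bt q A (∑ j, y v j • f j) v := by
    rw [← frame_expand hf hy v]; rfl
  rw [h1, bt_lsum H, Fin.sum_univ_four]
  simp only [bt_lsmul, ← hy, pow_succ]

theorem Ln_on {A : Matrix (Fin 4) (Fin 4) k} {y : (Fin 4 → k) ≃ₗ[k] (Fin 4 → k)}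
    (hy : ∀ v, frobForm q A v =
      y v 0 ^ (q + 1) + y v 1 ^ (q + 1) + y v 2 ^ (q + 1) + y v 3 ^ (q + 1))
    {c s : k} (hc : c ^ (q + 1) = 1) (hs : s ^ (q + 1) = -1) :
    IsLineOn (extremalCone k q A) (Ln y c s) := by
  have hs0 : s ≠ 0 := by
    rintro rfl
    rw [zero_pow (by omega)] at hs
    exact one_ne_zero (neg_eq_zero.1 hs.symm)
  refine ⟨isLine_Ln y c hs0, ?_⟩
  rintro v ⟨h1, h2⟩
  change frobForm q A v = 0
  have h3 := congrArg (· ^ (q + 1)) h1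
  have h4 := congrArg (· ^ (q + 1)) h2
  simp only [mul_pow, hc, hs] at h3 h4
  rw [hy]
  linear_combination h3 - h4

theorem goodS [IsAlgClosed k] (H : QF k q) {c c' : k} (hc : c ^ (q + 1) = 1)
    (hc' : c' ^ (q + 1) = 1) (hne : c ≠ c') : GoodS {s : k | s ^ (q + 1) = -1} q c c' where
  card := (H.card_norm (neg_ne_zero.2 one_ne_zero)).1
  fin := (H.card_norm (neg_ne_zero.2 one_ne_zero)).2
  ne := by
    rintro s hs rfl
    have hs' : (0 : k) ^ (q + 1) = -1 := hs
    rw [zero_pow (by omega)] at hs'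
    exact one_ne_zero (neg_eq_zero.1 hs'.symm)
  c0 := by rintro rfl; rw [zero_pow (by omega)] at hc; exact zero_ne_one hc
  c0' := by rintro rfl; rw [zero_pow (by omega)] at hc'; exact zero_ne_one hc'
  cc := hne
  mul := by
    intro s hs
    change (c' * s / c) ^ (q + 1) = -1
    rw [div_pow, mul_pow, hc, hc', show s ^ (q + 1) = -1 from hs]; simp
  mul' := by
    intro s hs
    change (c * s / c') ^ (q + 1) = -1
    rw [div_pow, mul_pow, hc, hc', show s ^ (q + 1) = -1 from hs]; simp

theorem frame_prop {A : Matrix (Fin 4) (Fin 4) k} {f g : Fin 4 → Fin 4 → k} (H : QF k q)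
    (hf : OrthFrame q A f) (hg : OrthFrame q A g) {y z : (Fin 4 → k) ≃ₗ[k] (Fin 4 → k)}
    (hy : ∀ v i, y v i = bt q A (f i) v) (hz : ∀ v i, z v i = bt q A (g i) v) {i i' : Fin 4}
    (h : ∀ j, j ≠ i' → z (y.symm (Pi.single j 1)) i = 0) :
    ∃ l : k, l ^ (q + 1) = 1 ∧ g i = l • f i' := by
  have h1 : ∀ j, j ≠ i' → y (g i) j = 0 := by
    intro j hj
    have h2 := h j hj
    rw [frame_symm hf hy, hz] at h2
    rw [hy, hg.2, h2, zero_pow H.q0]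
  have h3 : g i = y (g i) i' • f i' := by
    conv_lhs => rw [frame_expand hf hy (g i)]
    rw [Finset.sum_eq_single i']
    · intro j _ hj
      rw [h1 j hj, zero_smul]
    · simp
  refine ⟨y (g i) i', ?_, h3⟩
  have h4 := hg.1 i i
  rw [h3, bt_smul, bt_lsmul, hf.1] at h4
  simp only [if_true, mul_one] at h4
  rw [pow_succ, mul_comm]
  exact h4

theorem main_count [IsAlgClosed k] (H : QF k q) {A : Matrix (Fin 4) (Fin 4) k} (hA : IsUnit A)
    (hd : 5 ≤ q + 1) :
    (∏ i ∈ Finset.range 4, (HermData.uz q (i + 1)).1) * ((q + 1) * q) ≤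
      (16 * (q + 1) ^ 4) *
      Nat.card {P : Set (Submodule k (Fin 4 → k)) × Set (Submodule k (Fin 4 → k)) //
        IsDoubleTwoD (q + 1) P.1 P.2 ∧
          ∀ L ∈ P.1 ∪ P.2, IsLineOn (extremalCone k q A) L} := by
  classical
  obtain ⟨T, hT, hTf⟩ := frames_exist H hA
  have hTf' : ∀ f ∈ T, OrthFrame q A f := hTf
  choose Y hY using fun f => frame_equiv (q := q) A f
  obtain ⟨hMc, hMf⟩ := H.card_norm (one_ne_zero : (1 : k) ≠ 0)
  let M : Finset k := hMf.toFinset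
  have hM : ∀ c, c ∈ M ↔ c ^ (q + 1) = 1 := fun c => by simp [M]
  have hMcard : M.card = q + 1 := by rw [← hMc, Set.ncard_eq_toFinset_card _ hMf]
  let S : Set k := {s : k | s ^ (q + 1) = -1}
  let D : Set (Set (Submodule k (Fin 4 → k)) × Set (Submodule k (Fin 4 → k))) :=
    {P | IsDoubleTwoD (q + 1) P.1 P.2 ∧ ∀ L ∈ P.1 ∪ P.2, IsLineOn (extremalCone k q A) L}
  have hDf : D.Finite := by
    have hl := (lines_finite H hA).finite_subsets
    refine (hl.prod hl).subset ?_
    rintro P ⟨-, hP⟩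
    exact ⟨fun L hL => hP L (Or.inl hL), fun L hL => hP L (Or.inr hL)⟩
  have hDc : Nat.card {P : Set (Submodule k (Fin 4 → k)) × Set (Submodule k (Fin 4 → k)) //
        IsDoubleTwoD (q + 1) P.1 P.2 ∧
          ∀ L ∈ P.1 ∪ P.2, IsLineOn (extremalCone k q A) L} = hDf.toFinset.card := by
    rw [← Set.ncard_eq_toFinset_card D hDf, ← Nat.card_coe_set_eq]
    rfl
  rw [hDc]
  let Φ : (Fin 4 → Fin 4 → k) × (k × k) →
      Set (Submodule k (Fin 4 → k)) × Set (Submodule k (Fin 4 → k)) := fun t =>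
    (Rl (Y t.1) S t.2.1 ∪ Rl (sw (Y t.1)) S t.2.2, Rl (sw (Y t.1)) S t.2.1 ∪ Rl (Y t.1) S t.2.2)
  have hcardP : (T ×ˢ M.offDiag).card = T.card * ((q + 1) * q) := by
    rw [Finset.card_product, Finset.offDiag_card, hMcard]
    congr 1
    rw [Nat.mul_succ]
    simp
  have hmem : ∀ t ∈ T ×ˢ M.offDiag, OrthFrame q A t.1 ∧ t.2.1 ^ (q + 1) = 1 ∧
      t.2.2 ^ (q + 1) = 1 ∧ t.2.1 ≠ t.2.2 := by
    intro t ht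
    rw [Finset.mem_product, Finset.mem_offDiag, hM, hM] at ht
    exact ⟨hTf' _ ht.1, ht.2⟩
  have hmaps : ∀ t ∈ T ×ˢ M.offDiag, Φ t ∈ hDf.toFinset := by
    intro t ht
    obtain ⟨h1, h2, h3, h4⟩ := hmem t ht
    rw [Set.Finite.mem_toFinset]
    refine ⟨isDouble (Y t.1) (goodS H h2 h3 h4), ?_⟩
    have hform := frame_form H h1 (hY t.1 h1)
    have hform' : ∀ v, frobForm q A v = sw (Y t.1) v 0 ^ (q + 1) + sw (Y t.1) v 1 ^ (q + 1) +
        sw (Y t.1) v 2 ^ (q + 1) + sw (Y t.1) v 3 ^ (q + 1) := by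
      intro v
      rw [hform, sw0, sw1, sw2, sw3]
      ring
    rintro L ((⟨s, hs, rfl⟩ | ⟨s, hs, rfl⟩) | (⟨s, hs, rfl⟩ | ⟨s, hs, rfl⟩))
    · exact Ln_on hform h2 hs
    · exact Ln_on hform' h3 hs
    · exact Ln_on hform' h2 hs
    · exact Ln_on hform h3 hs
  have hfib : ∀ P ∈ hDf.toFinset, ((T ×ˢ M.offDiag).filter (fun t => Φ t = P)).card ≤
      16 * (q + 1) ^ 4 := by
    intro P _
    rcases ((T ×ˢ M.offDiag).filter (fun t => Φ t = P)).eq_empty_or_nonempty with he | ⟨t₀, ht₀⟩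
    · rw [he]; simp
    rw [Finset.mem_filter] at ht₀
    obtain ⟨ht₀, hP⟩ := ht₀
    obtain ⟨a1, a2, a3, a4⟩ := hmem t₀ ht₀
    let G : Fin 4 × Fin 4 × (Fin 4 → k) → (Fin 4 → Fin 4 → k) := fun u =>
      ![u.2.2 0 • t₀.1 u.1, u.2.2 1 • t₀.1 u.2.1, u.2.2 2 • t₀.1 (u.1 + 2),
        u.2.2 3 • t₀.1 (u.2.1 + 2)]
    let U : Finset (Fin 4 × Fin 4 × (Fin 4 → k)) :=
      Finset.univ ×ˢ Finset.univ ×ˢ Fintype.piFinset (fun _ => M)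
    have hU : U.card = 16 * (q + 1) ^ 4 := by
      simp only [U, Finset.card_product, Fintype.card_piFinset, hMcard, Finset.card_univ,
        Fintype.card_fin, Finset.prod_const]
      ring
    rw [← hU]
    refine le_trans ?_ (Finset.card_image_le (s := U) (f := G))
    apply Finset.card_le_card_of_injOn Prod.fst
    · intro t ht
      have ht' := Finset.mem_filter.1 ht
      obtain ⟨b1, b2, b3, b4⟩ := hmem t ht'.1
      have hset := congrArg Prod.fst (hP.trans ht'.2.symm)
      obtain ⟨i₀, i₁, c0, c2, c1, c3⟩ := fibre_frames (Y t₀.1) (Y t.1) hd (goodS H a2 a3 a4) hset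
      obtain ⟨l0, m0, n0⟩ := frame_prop H a1 b1 (hY _ a1) (hY _ b1) c0
      obtain ⟨l1, m1, n1⟩ := frame_prop H a1 b1 (hY _ a1) (hY _ b1) c1
      obtain ⟨l2, m2, n2⟩ := frame_prop H a1 b1 (hY _ a1) (hY _ b1) c2
      obtain ⟨l3, m3, n3⟩ := frame_prop H a1 b1 (hY _ a1) (hY _ b1) c3
      rw [Finset.mem_coe, Finset.mem_image]
      refine ⟨(i₀, i₁, ![l0, l1, l2, l3]), ?_, ?_⟩
      · simp only [U, Finset.mem_product, Finset.mem_univ, true_and, Fintype.mem_piFinset]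
        intro i
        rw [hM]
        fin_cases i
        · exact m0
        · exact m1
        · exact m2
        · exact m3
      · funext i
        fin_cases i
        · exact n0.symm
        · exact n1.symm
        · exact n2.symm
        · exact n3.symm
    · intro t ht u hu htu
      have ht' := Finset.mem_filter.1 ht
      have hu' := Finset.mem_filter.1 hu
      obtain ⟨b1, b2, b3, b4⟩ := hmem t ht'.1
      have hset := congrArg Prod.fst (ht'.2.trans hu'.2.symm)
      simp only [Φ] at hset
      rw [← htu] at hset
      obtain ⟨e1, e2⟩ := fibre_const2 (Y t.1) (goodS H b2 b3 b4) hset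
      exact Prod.ext htu (Prod.ext e1 e2)
  have hfinal := Finset.card_le_mul_card_image_of_maps_to hmaps _ hfib
  rw [hcardP] at hfinal
  exact (Nat.mul_le_mul_right _ hT).trans hfinal

end Count


/-- Let `X` be a smooth extremal surface of degree
`d = q+1 ≥ 5` in ℙ³(k).  Then the number `N` of double `2d`'s all of whose
`4d` lines lie on `X` satisfies `16·N ≥ (q³+1)(q²+1)(q−1)²q⁷`. -/
theorem count_double_2d_lower_bound {k : Type*} [Field k] [IsAlgClosed k]
    (p e q : ℕ) (hp : p.Prime) (hchar : CharP k p) (he : 1 ≤ e) (hq : q = p ^ e)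
    (A : Matrix (Fin 4) (Fin 4) k) (hA : IsUnit A) (hd : 5 ≤ q + 1) :
    16 * Nat.card {P : Set (Submodule k (Fin 4 → k)) × Set (Submodule k (Fin 4 → k)) //
        IsDoubleTwoD (q + 1) P.1 P.2 ∧
          ∀ L ∈ P.1 ∪ P.2, IsLineOn (extremalCone k q A) L}
      ≥ (q ^ 3 + 1) * (q ^ 2 + 1) * (q - 1) ^ 2 * q ^ 7 := by
  have h := main_count (QF.mk' hp hchar he hq) hA hd
  obtain ⟨r, rfl⟩ : ∃ r, q = r + 1 := ⟨q - 1, by omega⟩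
  rw [HermData.prod_uz r (by omega)] at h
  rw [Nat.add_sub_cancel]
  refine le_of_mul_le_mul_left (a := (r + 2) ^ 4) ?_ (by positivity)
  refine le_trans (le_of_eq ?_) (h.trans (le_of_eq ?_)) <;> ring
end
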